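/- arXiv:1112.5677 — 2 statements merged into one kernel-verified Lean document; each statement's English description precedes it below -/
import Mathlib

section
/- Let 1 < p < 2 and suppose ω(δ) = o(δ^{p−1}) as δ → +0. Let φ: ℝ → ℝ be a C^{1,ω}-smooth map of the circle into itself (φ is C¹ with φ′ ∈ Lip_ω(ℝ) and φ(t+2π) = φ(t) (mod 2π)) such that sup_{n∈ℤ} ‖e^{inφ}‖_{A_p(𝕋)} < ∞ (equivalently, φ acts from A(𝕋) to A_p(𝕋)). Then φ is linear: φ(t) = mt + t₀ (mod 2π) with m ∈ ℤ. -/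
open MeasureTheory Real Set
open scoped ENNReal

/-- The k-th Fourier coefficient of a (2π-periodic) function on the circle,
identified with a function on [0, 2π]. -/
noncomputable def fourierCoef (f : ℝ → ℂ) (k : ℤ) : ℂ :=
  (1 / (2 * (Real.pi : ℂ))) *
    ∫ t in (0:ℝ)..(2 * Real.pi), f t * Complex.exp (-Complex.I * (k : ℂ) * (t : ℂ))

/-- The A_p(𝕋) norm: ℓ^p norm of the sequence of Fourier coefficients
(valued in ℝ≥0∞ so that divergence gives ∞). -/
noncomputable def ApNorm (p : ℝ) (f : ℝ → ℂ) : ℝ≥0∞ :=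
  (∑' k : ℤ, ((‖fourierCoef f k‖₊ : ℝ≥0∞) ^ p)) ^ (1 / p)


lemma window_expand (N : ℕ) (u : ℝ) :
    ((Real.cos (u / 2) ^ (2 * N) : ℝ) : ℂ) = ∑ m ∈ Finset.range (2 * N + 1),
      (((2 * N).choose m / 4 ^ N : ℝ) : ℂ) * Complex.exp (Complex.I * (((m : ℂ)) - N) * u) := by
  push_cast
  rw [Complex.cos, div_pow, add_pow, Finset.sum_div]
  apply Finset.sum_congr rfl
  intro m hm
  have hm' : m ≤ 2 * N := by simpa [Nat.lt_succ_iff] using hm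
  rw [← Complex.exp_nat_mul, ← Complex.exp_nat_mul, ← Complex.exp_add, Nat.cast_sub hm',
    pow_mul]
  have : (m : ℂ) * ((u : ℂ) / 2 * Complex.I) + (((2 * N : ℕ) : ℂ) - m) * (-((u : ℂ) / 2) * Complex.I)
      = Complex.I * ((m : ℂ) - N) * u := by
    push_cast; ring
  rw [this]
  norm_num
  ring

lemma window_sum (N : ℕ) :
    ∑ m ∈ Finset.range (2 * N + 1), ((2 * N).choose m / 4 ^ N : ℝ) = 1 := by
  rw [← Finset.sum_div]
  have : ∑ m ∈ Finset.range (2 * N + 1), ((2 * N).choose m : ℝ) = 4 ^ N := by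
    have h := Nat.sum_range_choose (2 * N)
    rw [pow_mul] at h
    norm_num at h
    exact_mod_cast h
  rw [this]
  field_simp

lemma window_moment0 (N : ℕ) :
    ∫ u in (-π)..π, Real.sin (u / 2) ^ 2 * Real.cos (u / 2) ^ (2 * N)
      = (∫ u in (-π)..π, Real.cos (u / 2) ^ (2 * N)) / (2 * (N + 1)) := by
  have hd : ∀ u ∈ uIcc (-π) π, HasDerivAt (fun u => Real.sin (u / 2) * Real.cos (u / 2) ^ (2 * N + 1))
      (1 / 2 * Real.cos (u / 2) ^ (2 * N)
        - (N + 1) * (Real.sin (u / 2) ^ 2 * Real.cos (u / 2) ^ (2 * N))) u := by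
    intro u _
    have h1 : HasDerivAt (fun u : ℝ => u / 2) (1 / 2) u := (hasDerivAt_id u).div_const 2
    have h2 := h1.sin.mul (h1.cos.pow (2 * N + 1))
    refine HasDerivAt.congr_deriv h2 ?_
    have := Real.sin_sq_add_cos_sq (u / 2)
    have h3 : Real.sin (u / 2) ^ 2 = 1 - Real.cos (u / 2) ^ 2 := by linarith
    simp only [Nat.add_sub_cancel, Pi.pow_apply]
    push_cast
    rw [pow_succ (Real.cos (u / 2)) (2 * N)]
    have h4 : Real.sin (u / 2) * ((2 * (N : ℝ) + 1) * Real.cos (u / 2) ^ (2 * N) * (-Real.sin (u / 2) * (1 / 2))) = - (2 * (N : ℝ) + 1) / 2 * Real.sin (u / 2) ^ 2 * Real.cos (u / 2) ^ (2 * N) := by ring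
    rw [h4, h3]
    ring
  have hI := intervalIntegral.integral_eq_sub_of_hasDerivAt hd
    (Continuous.intervalIntegrable (by fun_prop) _ _)
  rw [intervalIntegral.integral_sub (Continuous.intervalIntegrable (by fun_prop) _ _)
    (Continuous.intervalIntegrable (by fun_prop) _ _), intervalIntegral.integral_const_mul,
    intervalIntegral.integral_const_mul] at hI
  have e1 : Real.cos (-π / 2) = 0 := by
    rw [neg_div, Real.cos_neg, Real.cos_pi_div_two]
  rw [Real.cos_pi_div_two, e1] at hI
  simp at hI
  have : (N : ℝ) + 1 ≠ 0 := by positivity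
  field_simp
  linarith

lemma window_moment (N : ℕ) :
    ∫ u in (-π)..π, u ^ 2 * Real.cos (u / 2) ^ (2 * N)
      ≤ π ^ 2 * ((∫ u in (-π)..π, Real.cos (u / 2) ^ (2 * N)) / (2 * (N + 1))) := by
  rw [← window_moment0, ← intervalIntegral.integral_const_mul]
  apply intervalIntegral.integral_mono_on (by linarith [Real.pi_pos])
    (Continuous.intervalIntegrable (by fun_prop) _ _)
    (Continuous.intervalIntegrable (by fun_prop) _ _)
  intro u hu
  have h0 : 0 ≤ Real.cos (u / 2) ^ (2 * N) := by rw [pow_mul]; positivity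
  have h1 : |u| ≤ π := abs_le.mpr hu
  have h2 : 2 / π * |u / 2| ≤ |Real.sin (u / 2)| := by
    apply Real.mul_abs_le_abs_sin
    rw [abs_div, abs_two]; linarith
  rw [abs_div, abs_two] at h2
  have h3 : |u| ≤ π * |Real.sin (u / 2)| := by
    have := Real.pi_pos
    have h4 : 2 / π * (|u| / 2) = |u| / π := by field_simp
    rw [h4, div_le_iff₀ this] at h2
    linarith
  have h4 : u ^ 2 ≤ π ^ 2 * Real.sin (u / 2) ^ 2 := by
    have := pow_le_pow_left₀ (abs_nonneg u) h3 2
    rwa [mul_pow, sq_abs, sq_abs] at this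
  calc _ ≤ (π ^ 2 * Real.sin (u / 2) ^ 2) * Real.cos (u / 2) ^ (2 * N) := by gcongr
    _ = _ := by ring

lemma window_lower (N : ℕ) (hN : 1 ≤ N) :
    3 / 2 / √N ≤ ∫ u in (-π)..π, Real.cos (u / 2) ^ (2 * N) := by
  have hN' : (1 : ℝ) ≤ N := by exact_mod_cast hN
  have hs : 1 ≤ √(N : ℝ) := Real.one_le_sqrt.mpr hN'
  set r : ℝ := 1 / √N with hr
  have hr0 : 0 < r := by positivity
  have hr1 : r ≤ 1 := by rw [hr, div_le_one (by positivity)]; exact hs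
  have hrN : N * r ^ 2 = 1 := by
    rw [hr, div_pow, Real.sq_sqrt (by positivity)]; field_simp
  have hpi := Real.pi_gt_three
  have h1 : ∫ u in (-r)..r, (3 / 4 : ℝ) ≤ ∫ u in (-r)..r, Real.cos (u / 2) ^ (2 * N) := by
    apply intervalIntegral.integral_mono_on (by linarith)
      (Continuous.intervalIntegrable (by fun_prop) _ _)
      (Continuous.intervalIntegrable (by fun_prop) _ _)
    intro u hu
    have hu' : u ^ 2 ≤ r ^ 2 := sq_le_sq' hu.1 hu.2
    have hc : 1 - u ^ 2 / 8 ≤ Real.cos (u / 2) := by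
      have := Real.one_sub_sq_div_two_le_cos (x := u / 2)
      nlinarith
    have hu2 : u ^ 2 ≤ 1 := by nlinarith
    have hb := one_add_mul_le_pow (a := - (u ^ 2 / 8)) (by linarith) (2 * N)
    push_cast at hb
    have hb2 : (1 + -(u ^ 2 / 8)) ^ (2 * N) ≤ Real.cos (u / 2) ^ (2 * N) := by
      apply pow_le_pow_left₀ (by linarith); linarith
    nlinarith
  have h2 : ∫ u in (-r)..r, Real.cos (u / 2) ^ (2 * N) ≤ ∫ u in (-π)..π, Real.cos (u / 2) ^ (2 * N) := by
    apply intervalIntegral.integral_mono_interval (by linarith) (by linarith) (by linarith)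
    · filter_upwards with u
      show 0 ≤ Real.cos (u / 2) ^ (2 * N)
      rw [pow_mul]; positivity
    · exact Continuous.intervalIntegrable (by fun_prop) _ _
  rw [intervalIntegral.integral_const, smul_eq_mul] at h1
  calc 3 / 2 / √N = (r - -r) * (3 / 4) := by rw [hr]; ring
    _ ≤ _ := h1.trans h2

lemma shift_integral (f : ℝ → ℂ) (hper : ∀ t, f (t + 2 * π) = f t) (l : ℤ) (s : ℝ) :
    ∫ u in (-π)..π, f (s + u) * Complex.exp (-Complex.I * l * u)
      = Complex.exp (Complex.I * l * s) * (2 * π * fourierCoef f l) := by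
  have hg : Function.Periodic (fun t : ℝ => f t * Complex.exp (-Complex.I * (l : ℂ) * (t : ℂ))) (2 * π) := by
    intro t
    show f (t + 2 * π) * Complex.exp (-Complex.I * (l : ℂ) * ((t + 2 * π : ℝ) : ℂ)) = _
    rw [hper]
    congr 1
    rw [Complex.exp_eq_exp_iff_exists_int]
    exact ⟨-l, by push_cast; ring⟩
  have h1 : ∀ u : ℝ, f (s + u) * Complex.exp (-Complex.I * l * u)
      = Complex.exp (Complex.I * l * s) *
        (fun t : ℝ => f t * Complex.exp (-Complex.I * (l : ℂ) * (t : ℂ))) (s + u) := by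
    intro u
    simp only
    rw [mul_left_comm, ← Complex.exp_add]
    congr 2
    push_cast; ring
  simp_rw [h1]
  rw [intervalIntegral.integral_const_mul,
    intervalIntegral.integral_comp_add_left (fun t : ℝ => f t * Complex.exp (-Complex.I * (l : ℂ) * (t : ℂ)))]
  congr 1
  have h2 := hg.intervalIntegral_add_eq (s + -π) 0
  have e : s + -π + 2 * π = s + π := by ring
  rw [e, zero_add] at h2
  rw [h2, fourierCoef]
  have : (π : ℂ) ≠ 0 := by exact_mod_cast Real.pi_ne_zero
  field_simp

lemma window_coef (f : ℝ → ℂ) (hf : Continuous f) (hper : ∀ t, f (t + 2 * π) = f t)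
    (N : ℕ) (k : ℤ) (s : ℝ) :
    ‖∫ u in (-π)..π, f (s + u) * Complex.exp (-Complex.I * k * u) *
        ((Real.cos (u / 2) ^ (2 * N) : ℝ) : ℂ)‖
      ≤ 2 * π * ∑ m ∈ Finset.range (2 * N + 1), ((2 * N).choose m / 4 ^ N : ℝ) *
          ‖fourierCoef f (k + (N - m))‖ := by
  have h1 : ∀ u : ℝ, f (s + u) * Complex.exp (-Complex.I * k * u) *
        ((Real.cos (u / 2) ^ (2 * N) : ℝ) : ℂ) =
      ∑ m ∈ Finset.range (2 * N + 1), (((2 * N).choose m / 4 ^ N : ℝ) : ℂ) *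
        (f (s + u) * Complex.exp (-Complex.I * ((k + (N - m) : ℤ) : ℂ) * u)) := by
    intro u
    rw [window_expand, Finset.mul_sum]
    apply Finset.sum_congr rfl
    intro m _
    have : Complex.exp (-Complex.I * ((k + (N - m) : ℤ) : ℂ) * u) =
      Complex.exp (-Complex.I * k * u) * Complex.exp (Complex.I * (((m : ℂ)) - N) * u) := by
      rw [← Complex.exp_add]; congr 1; push_cast; ring
    rw [this]; ring
  simp_rw [h1]
  rw [intervalIntegral.integral_finsetSum]
  · rw [Finset.mul_sum]
    refine (norm_sum_le _ _).trans (Finset.sum_le_sum ?_)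
    intro m _
    rw [intervalIntegral.integral_const_mul, shift_integral f hper, norm_mul, norm_mul, norm_mul]
    have e1 : ‖Complex.exp (Complex.I * ((k + (N - m) : ℤ) : ℂ) * s)‖ = 1 := by
      rw [Complex.norm_exp]; simp
    have e2 : ‖(2 * π : ℂ)‖ = 2 * π := by
      simp [abs_of_pos Real.pi_pos]
    rw [e1, e2, Complex.norm_real, Real.norm_of_nonneg (by positivity)]
    apply le_of_eq; ring
  · intro m _
    exact Continuous.intervalIntegrable (by fun_prop) _ _

lemma apnorm_finset (p : ℝ) (hp : 0 < p) (f : ℝ → ℂ) (B : ℝ) (hB : ApNorm p f ≤ ENNReal.ofReal B)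
    (K : Finset ℤ) (c : ℤ) :
    ∑ k ∈ K, ‖fourierCoef f (k + c)‖ ^ p ≤ (max B 0) ^ p := by
  have h1 : (∑' k : ℤ, ((‖fourierCoef f k‖₊ : ℝ≥0∞) ^ p)) ≤ ENNReal.ofReal B ^ p := by
    have := ENNReal.rpow_le_rpow hB hp.le
    rwa [ApNorm, ← ENNReal.rpow_mul, one_div, inv_mul_cancel₀ hp.ne', ENNReal.rpow_one] at this
  have h2 : ∑ k ∈ K, ((‖fourierCoef f (k + c)‖₊ : ℝ≥0∞) ^ p) ≤ ENNReal.ofReal B ^ p := by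
    refine le_trans ?_ h1
    refine (ENNReal.sum_le_tsum K).trans ?_
    exact ENNReal.tsum_comp_le_tsum_of_injective (f := fun k : ℤ => k + c) (add_left_injective c)
      (fun k => (‖fourierCoef f k‖₊ : ℝ≥0∞) ^ p)
  have h3 : ENNReal.ofReal (∑ k ∈ K, ‖fourierCoef f (k + c)‖ ^ p) ≤ ENNReal.ofReal ((max B 0) ^ p) := by
    rw [ENNReal.ofReal_sum_of_nonneg (fun _ _ => by positivity),
      ← ENNReal.ofReal_rpow_of_nonneg (le_max_right _ _) hp.le]
    have : ENNReal.ofReal (max B 0) = ENNReal.ofReal B := by simp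
    rw [this]
    convert h2 using 2 with k
    rw [← ENNReal.ofReal_rpow_of_nonneg (norm_nonneg _) hp.le, ofReal_norm, enorm_eq_nnnorm]
  exact (ENNReal.ofReal_le_ofReal_iff (by positivity)).mp h3

lemma rpow_le_one_add_sq (x p : ℝ) (hx : 0 ≤ x) (hp1 : 1 < p) (hp2 : p < 2) :
    x ^ p ≤ 1 + x ^ 2 := by
  rcases le_total x 1 with h | h
  · have := Real.rpow_le_one hx h (by linarith : 0 ≤ p)
    nlinarith [sq_nonneg x]
  · have := Real.rpow_le_rpow_of_exponent_le h hp2.le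
    rw [Real.rpow_two] at this
    linarith

lemma taylor_bound (p : ℝ) (hp1 : 1 < p) (ω : ℝ → ℝ)
    (hω_little_o : ∀ ε : ℝ, 0 < ε → ∃ δ₀ : ℝ, 0 < δ₀ ∧
      ∀ δ : ℝ, 0 < δ → δ < δ₀ → ω δ ≤ ε * δ ^ (p - 1))
    (φ : ℝ → ℝ) (hφ_C1 : ContDiff ℝ 1 φ)
    (hφ_lip : ∃ C : ℝ, 0 < C ∧ ∀ s t : ℝ, |deriv φ s - deriv φ t| ≤ C * ω |s - t|)
    (η : ℝ) (hη : 0 < η) :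
    ∃ δ₀ : ℝ, 0 < δ₀ ∧ ∀ s u : ℝ, |u| < δ₀ →
      |φ (s + u) - φ s - deriv φ s * u| ≤ η * |u| ^ p := by
  obtain ⟨C, hC, hlip⟩ := hφ_lip
  obtain ⟨δ₀, hδ₀, hd⟩ := hω_little_o (η / C) (by positivity)
  refine ⟨δ₀, hδ₀, fun s u hu => ?_⟩
  rcases eq_or_ne u 0 with rfl | hu0
  · simp [Real.zero_rpow (by linarith : p ≠ 0)]
  have hup : 0 < |u| := abs_pos.mpr hu0
  have hdiff : Differentiable ℝ φ := hφ_C1.differentiable (by norm_num)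
  -- bound derivative along the segment
  have key : ∀ x ∈ uIcc s (s + u), ‖deriv φ x - deriv φ s‖ ≤ η * |u| ^ (p - 1) := by
    intro x hx
    have hxs : |x - s| ≤ |u| := by
      have := abs_sub_left_of_mem_uIcc hx
      simpa using this
    rcases eq_or_ne x s with rfl | hne
    · simp; positivity
    have hpos : 0 < |x - s| := abs_pos.mpr (sub_ne_zero.mpr hne)
    rw [Real.norm_eq_abs]
    calc _ ≤ C * ω |x - s| := hlip x s
      _ ≤ C * (η / C * |x - s| ^ (p - 1)) := by
          gcongr; exact hd _ hpos (hxs.trans_lt hu)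
      _ = η * |x - s| ^ (p - 1) := by field_simp
      _ ≤ _ := by
          gcongr
  have hmv := (convex_uIcc s (s + u)).norm_image_sub_le_of_norm_hasDerivWithin_le
    (f := fun x => φ x - deriv φ s * x) (f' := fun x => deriv φ x - deriv φ s)
    (C := η * |u| ^ (p - 1)) (x := s) (y := s + u)
    (fun x _ => by
      have h2 := ((hdiff x).hasDerivAt.sub ((hasDerivAt_id x).const_mul (deriv φ s)))
      simp only [mul_one] at h2
      exact h2.hasDerivWithinAt) key left_mem_uIcc right_mem_uIcc
  rw [Real.norm_eq_abs, Real.norm_eq_abs] at hmv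
  have e : φ (s + u) - deriv φ s * (s + u) - (φ s - deriv φ s * s) = φ (s + u) - φ s - deriv φ s * u := by ring
  rw [e, add_sub_cancel_left] at hmv
  refine hmv.trans (le_of_eq ?_)
  rw [mul_assoc, ← Real.rpow_add_one hup.ne', sub_add_cancel]

lemma norm_exp_I_sub_one (x : ℝ) : ‖Complex.exp (Complex.I * x) - 1‖ ≤ |x| ∧
    ‖Complex.exp (Complex.I * x) - 1‖ ≤ 2 := by
  constructor
  · simpa using Real.norm_exp_I_mul_ofReal_sub_one_le (x := x)
  · refine (norm_sub_le _ _).trans ?_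
    rw [mul_comm, Complex.norm_exp_ofReal_mul_I]; norm_num

/-- The windowed integral is at least half of the mass of the window. -/
lemma window_main (p : ℝ) (hp1 : 1 < p) (hp2 : p < 2) (R : ℝ → ℝ) (hR : Continuous R)
    (η δ₀ : ℝ) (hη : 0 < η) (hδ : 0 < δ₀) (hb : ∀ u, |u| < δ₀ → |R u| ≤ η * |u| ^ p)
    (n N : ℕ) (hN : 1 ≤ N) (hn : n * (24 * η) ≤ (N : ℝ) ^ (p / 2)) (hN2 : 40 ≤ N * δ₀ ^ 2) :
    (∫ u in (-π)..π, Real.cos (u / 2) ^ (2 * N)) / 2 ≤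
      ‖∫ u in (-π)..π, Complex.exp (Complex.I * ((n * R u : ℝ) : ℂ)) *
        ((Real.cos (u / 2) ^ (2 * N) : ℝ) : ℂ)‖ := by
  set W := ∫ u in (-π)..π, Real.cos (u / 2) ^ (2 * N) with hW
  have hN' : (1 : ℝ) ≤ N := by exact_mod_cast hN
  have hNpos : (0 : ℝ) < N := by linarith
  have hw : ∀ u : ℝ, 0 ≤ Real.cos (u / 2) ^ (2 * N) := by
    intro u; rw [pow_mul]; positivity
  have hWpos : 0 < W := lt_of_lt_of_le (by positivity) (window_lower N hN)
  have hpi := Real.pi_pos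
  have hpt : ∀ u : ℝ, ‖Complex.exp (Complex.I * ((n * R u : ℝ) : ℂ)) - 1‖ ≤
      1 / 24 * (1 + N * u ^ 2) + N / 20 * u ^ 2 := by
    intro u
    obtain ⟨h1, h2⟩ := norm_exp_I_sub_one (n * R u)
    rcases lt_or_ge |u| δ₀ with h | h
    · refine h1.trans ?_
      rw [abs_mul, Nat.abs_cast]
      have h3 : |u| ^ p * (N : ℝ) ^ (p / 2) ≤ 1 + N * u ^ 2 := by
        have := rpow_le_one_add_sq (|u| * √N) p (by positivity) hp1 hp2
        rw [Real.mul_rpow (by positivity) (by positivity), mul_pow, sq_abs,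
          Real.sq_sqrt hNpos.le, Real.sqrt_eq_rpow, ← Real.rpow_mul hNpos.le] at this
        have e : 1 / 2 * p = p / 2 := by ring
        rw [e] at this
        linarith
      have h4 : (n : ℝ) * |R u| ≤ 1 / 24 * (1 + N * u ^ 2) := by
        calc (n : ℝ) * |R u| ≤ n * (η * |u| ^ p) := by gcongr; exact hb u h
          _ = 1 / 24 * (|u| ^ p * (n * (24 * η))) := by ring
          _ ≤ 1 / 24 * (|u| ^ p * (N : ℝ) ^ (p / 2)) := by gcongr
          _ ≤ _ := by gcongr
      have : 0 ≤ N / 20 * u ^ 2 := by positivity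
      linarith
    · refine h2.trans ?_
      have h3 : δ₀ ^ 2 ≤ u ^ 2 := by
        rw [← sq_abs u]; exact pow_le_pow_left₀ hδ.le h 2
      have h4 : N * δ₀ ^ 2 ≤ N * u ^ 2 := by gcongr
      nlinarith
  have hM := window_moment N
  rw [← hW] at hM
  set M := ∫ u in (-π)..π, u ^ 2 * Real.cos (u / 2) ^ (2 * N) with hMdef
  have hM2 : N * M ≤ 5 * W := by
    have hp10 : π ^ 2 ≤ 10 := by nlinarith [Real.pi_lt_d2, Real.pi_gt_three]
    calc N * M ≤ N * (π ^ 2 * (W / (2 * (N + 1)))) := by gcongr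
      _ ≤ N * (10 * (W / (2 * N))) := by gcongr; linarith
      _ = 5 * W := by field_simp; norm_num
  have hcont1 : Continuous fun u : ℝ => Complex.exp (Complex.I * ((n * R u : ℝ) : ℂ)) *
        ((Real.cos (u / 2) ^ (2 * N) : ℝ) : ℂ) := by fun_prop
  have hcont2 : Continuous fun u : ℝ => ((Real.cos (u / 2) ^ (2 * N) : ℝ) : ℂ) := by fun_prop
  have hdiff : ‖(∫ u in (-π)..π, Complex.exp (Complex.I * ((n * R u : ℝ) : ℂ)) *
        ((Real.cos (u / 2) ^ (2 * N) : ℝ) : ℂ)) - (W : ℂ)‖ ≤ W / 2 := by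
    rw [hW, ← intervalIntegral.integral_ofReal,
      ← intervalIntegral.integral_sub (hcont1.intervalIntegrable _ _) (hcont2.intervalIntegrable _ _)]
    have hle : ‖∫ u in (-π)..π, (Complex.exp (Complex.I * ((n * R u : ℝ) : ℂ)) *
        ((Real.cos (u / 2) ^ (2 * N) : ℝ) : ℂ) - ((Real.cos (u / 2) ^ (2 * N) : ℝ) : ℂ))‖ ≤
        ∫ u in (-π)..π, (1 / 24 * Real.cos (u / 2) ^ (2 * N) +
          (N * (11 / 120)) * (u ^ 2 * Real.cos (u / 2) ^ (2 * N))) := by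
      apply intervalIntegral.norm_integral_le_of_norm_le (by linarith)
      · filter_upwards with u _
        have e : Complex.exp (Complex.I * ((n * R u : ℝ) : ℂ)) *
          ((Real.cos (u / 2) ^ (2 * N) : ℝ) : ℂ) - ((Real.cos (u / 2) ^ (2 * N) : ℝ) : ℂ) =
          (Complex.exp (Complex.I * ((n * R u : ℝ) : ℂ)) - 1) *
          ((Real.cos (u / 2) ^ (2 * N) : ℝ) : ℂ) := by ring
        rw [e, norm_mul, Complex.norm_real, Real.norm_of_nonneg (hw u)]
        refine (mul_le_mul_of_nonneg_right (hpt u) (hw u)).trans (le_of_eq ?_)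
        ring
      · exact Continuous.intervalIntegrable (by fun_prop) _ _
    rw [intervalIntegral.integral_add (Continuous.intervalIntegrable (by fun_prop) _ _)
      (Continuous.intervalIntegrable (by fun_prop) _ _), intervalIntegral.integral_const_mul,
      intervalIntegral.integral_const_mul, ← hW, ← hMdef] at hle
    refine hle.trans ?_
    linarith
  have h3 := norm_sub_norm_le (W : ℂ) (∫ u in (-π)..π, Complex.exp (Complex.I * ((n * R u : ℝ) : ℂ)) *
        ((Real.cos (u / 2) ^ (2 * N) : ℝ) : ℂ))
  rw [norm_sub_rev, Complex.norm_real, Real.norm_of_nonneg hWpos.le] at h3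
  linarith

/-- Main counting estimate. -/
lemma count_bound (p : ℝ) (hp1 : 1 < p) (hp2 : p < 2) (φ : ℝ → ℝ) (hφc : Continuous φ)
    (hφ_circ : ∀ t : ℝ, ∃ k : ℤ, φ (t + 2 * Real.pi) - φ t = 2 * Real.pi * k)
    (B : ℝ) (hB : ∀ n : ℤ,
      ApNorm p (fun t => Complex.exp (Complex.I * (n : ℂ) * (φ t : ℂ))) ≤ ENNReal.ofReal B)
    (η δ₀ : ℝ) (hη : 0 < η) (hδ : 0 < δ₀)
    (hb : ∀ s u, |u| < δ₀ → |φ (s + u) - φ s - deriv φ s * u| ≤ η * |u| ^ p)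
    (n N : ℕ) (hN : 1 ≤ N) (hn : n * (24 * η) ≤ (N : ℝ) ^ (p / 2)) (hN2 : 40 ≤ N * δ₀ ^ 2)
    (K : Finset ℤ) (hK : ∀ k ∈ K, ∃ s, n * deriv φ s = k) :
    (K.card : ℝ) ≤ 100 * (max B 0) ^ p * (N : ℝ) ^ (p / 2) := by
  set f : ℝ → ℂ := fun t => Complex.exp (Complex.I * ((n : ℤ) : ℂ) * (φ t : ℂ)) with hf
  have hfc : Continuous f := by fun_prop
  have hper : ∀ t, f (t + 2 * π) = f t := by
    intro t
    obtain ⟨j, hj⟩ := hφ_circ t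
    have e : φ (t + 2 * π) = φ t + 2 * π * j := by linarith
    simp only [hf]
    rw [e, Complex.exp_eq_exp_iff_exists_int]
    exact ⟨n * j, by push_cast; ring⟩
  have hN' : (1 : ℝ) ≤ N := by exact_mod_cast hN
  have hNpos : (0 : ℝ) < N := by linarith
  have hspos : 0 < √(N : ℝ) := Real.sqrt_pos.mpr hNpos
  set a : ℕ → ℝ := fun m => ((2 * N).choose m / 4 ^ N : ℝ) with ha
  have ha0 : ∀ m, 0 ≤ a m := fun m => by simp only [ha]; positivity
  have hasum : ∑ m ∈ Finset.range (2 * N + 1), a m = 1 := window_sum N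
  have hk : ∀ k ∈ K, 1 / 100 * ((N : ℝ) ^ (p / 2))⁻¹ ≤
      ∑ m ∈ Finset.range (2 * N + 1), a m * ‖fourierCoef f (k + (N - m))‖ ^ p := by
    intro k hkK
    obtain ⟨s, hs⟩ := hK k hkK
    have h1 := window_main p hp1 hp2 (fun u => φ (s + u) - φ s - deriv φ s * u) (by fun_prop)
      η δ₀ hη hδ (hb s) n N hN hn hN2
    have h2 := window_coef f hfc hper N k s
    have e : ∫ u in (-π)..π, f (s + u) * Complex.exp (-Complex.I * k * u) *
        ((Real.cos (u / 2) ^ (2 * N) : ℝ) : ℂ) = Complex.exp (Complex.I * ((n * φ s : ℝ) : ℂ)) *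
        ∫ u in (-π)..π, Complex.exp (Complex.I * ((n * (φ (s + u) - φ s - deriv φ s * u) : ℝ) : ℂ)) *
        ((Real.cos (u / 2) ^ (2 * N) : ℝ) : ℂ) := by
      rw [← intervalIntegral.integral_const_mul]
      congr 1
      ext u
      rw [← mul_assoc, ← Complex.exp_add]
      show Complex.exp _ * _ = _
      rw [← Complex.exp_add]
      congr 2
      have hs' : ((k : ℤ) : ℂ) = n * ((deriv φ s : ℝ) : ℂ) := by exact_mod_cast hs.symm
      rw [hs']
      push_cast; ring
    rw [e, norm_mul, mul_comm Complex.I, Complex.norm_exp_ofReal_mul_I, one_mul] at h2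
    have h3 := window_lower N hN
    have h4 : 1 / 10 * (√N)⁻¹ ≤ ∑ m ∈ Finset.range (2 * N + 1), a m * ‖fourierCoef f (k + (N - m))‖ := by
      have h5 : 3 / 2 / √(N : ℝ) / 2 ≤ 2 * π * ∑ m ∈ Finset.range (2 * N + 1), a m * ‖fourierCoef f (k + (N - m))‖ := by
        refine le_trans ?_ (h1.trans h2)
        linarith
      have hpi := Real.pi_lt_d2
      have h6 : (0 : ℝ) ≤ ∑ m ∈ Finset.range (2 * N + 1), a m * ‖fourierCoef f (k + (N - m))‖ :=
        Finset.sum_nonneg fun m _ => mul_nonneg (ha0 m) (norm_nonneg _)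
      have h7 : 3 / 2 / √(N : ℝ) / 2 = 3 / 4 * (√N)⁻¹ := by field_simp; norm_num
      rw [h7] at h5
      nlinarith [inv_pos.mpr hspos]
    have h5 := Real.rpow_arith_mean_le_arith_mean_rpow (Finset.range (2 * N + 1)) a
      (fun m => ‖fourierCoef f (k + (N - m))‖) (fun m _ => ha0 m) hasum (fun m _ => norm_nonneg _) hp1.le
    refine le_trans ?_ h5
    refine le_trans ?_ (Real.rpow_le_rpow (by positivity) h4 (by linarith : 0 ≤ p))
    rw [Real.mul_rpow (by positivity) (by positivity), Real.inv_rpow (by positivity),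
      Real.sqrt_eq_rpow, ← Real.rpow_mul hNpos.le, show 1 / 2 * p = p / 2 by ring]
    have h6 : (1 / 100 : ℝ) ≤ (1 / 10) ^ p := by
      have := Real.rpow_le_rpow_of_exponent_ge (x := 1 / 10) (by norm_num) (by norm_num) hp2.le
      rw [Real.rpow_two] at this
      norm_num at this ⊢
      exact this
    gcongr
  have hsum := Finset.sum_le_sum hk
  rw [Finset.sum_const, nsmul_eq_mul, Finset.sum_comm] at hsum
  have hub : ∑ m ∈ Finset.range (2 * N + 1), ∑ k ∈ K, a m * ‖fourierCoef f (k + (N - m))‖ ^ p ≤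
      (max B 0) ^ p := by
    calc _ ≤ ∑ m ∈ Finset.range (2 * N + 1), a m * (max B 0) ^ p := by
          apply Finset.sum_le_sum
          intro m _
          rw [← Finset.mul_sum]
          exact mul_le_mul_of_nonneg_left (apnorm_finset p (by linarith) f B (hB n) K _) (ha0 m)
      _ = _ := by rw [← Finset.sum_mul, hasum, one_mul]
  have hX : 0 < (N : ℝ) ^ (p / 2) := by positivity
  have := hsum.trans hub
  rw [← mul_assoc, ← div_eq_mul_inv, div_le_iff₀ hX] at this
  linarith

lemma deriv_const_aux (p : ℝ) (hp1 : 1 < p) (hp2 : p < 2) (φ : ℝ → ℝ) (hφ_C1 : ContDiff ℝ 1 φ)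
    (hφ_circ : ∀ t : ℝ, ∃ k : ℤ, φ (t + 2 * Real.pi) - φ t = 2 * Real.pi * k)
    (B : ℝ) (hB : ∀ n : ℤ,
      ApNorm p (fun t => Complex.exp (Complex.I * (n : ℂ) * (φ t : ℂ))) ≤ ENNReal.ofReal B)
    (hT : ∀ η : ℝ, 0 < η → ∃ δ₀ : ℝ, 0 < δ₀ ∧ ∀ s u : ℝ, |u| < δ₀ →
      |φ (s + u) - φ s - deriv φ s * u| ≤ η * |u| ^ p) (x y : ℝ) :
    ¬ deriv φ x < deriv φ y := by
  intro hxy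
  have hdc : Continuous (deriv φ) := hφ_C1.continuous_deriv le_rfl
  set α := deriv φ x
  set β := deriv φ y
  set g := β - α with hg
  have hg0 : 0 < g := by simp only [hg]; linarith
  set D := (max B 0) ^ p with hD
  have hD0 : 0 ≤ D := by positivity
  -- choose η
  set η := g / (10000 * (D + 1)) with hη
  have hη0 : 0 < η := by positivity
  obtain ⟨δ₀, hδ, hb⟩ := hT η hη0
  -- choose N
  have hlim : Filter.Tendsto (fun N : ℕ => (N : ℝ) ^ (p / 2)) Filter.atTop Filter.atTop :=
    (tendsto_rpow_atTop (by linarith)).comp tendsto_natCast_atTop_atTop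
  have hev1 := hlim.eventually_ge_atTop (24 * η * (2 + 4 / g))
  have hev2 := tendsto_natCast_atTop_atTop (R := ℝ) |>.eventually_ge_atTop (40 / δ₀ ^ 2)
  obtain ⟨N, h1, h2, h3⟩ := (hev1.and (hev2.and (Filter.eventually_ge_atTop 1))).exists
  set X := (N : ℝ) ^ (p / 2) with hX
  have hN2 : 40 ≤ N * δ₀ ^ 2 := by rwa [div_le_iff₀ (by positivity)] at h2
  set n := ⌊X / (24 * η)⌋₊ with hn
  have hX0 : 0 ≤ X := by positivity
  have hn1 : (n : ℝ) ≤ X / (24 * η) := Nat.floor_le (by positivity)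
  have hn2 : X / (24 * η) < n + 1 := Nat.lt_floor_add_one _
  have hn3 : n * (24 * η) ≤ X := by rwa [le_div_iff₀ (by positivity)] at hn1
  have h4 : 2 + 4 / g ≤ X / (24 * η) := by rw [le_div_iff₀ (by positivity)]; linarith
  have h4g : 0 < 4 / g := by positivity
  have hn4 : X / (48 * η) ≤ n := by
    have : X / (48 * η) = X / (24 * η) / 2 := by field_simp; ring
    rw [this]; linarith
  have hn5 : 2 ≤ n * g := by
    have : 2 / g ≤ n := by
      have e : 4 / g = 2 * (2 / g) := by ring
      have : 0 < 2 / g := by positivity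
      linarith
    rwa [div_le_iff₀ hg0] at this
  set K : Finset ℤ := Finset.Icc ⌈n * α⌉ ⌊n * β⌋ with hKdef
  have hnpos : (0 : ℝ) < n := by
    by_contra h
    have : (n : ℝ) = 0 := le_antisymm (not_lt.mp h) (Nat.cast_nonneg n)
    rw [this] at hn5; linarith
  have hK : ∀ k ∈ K, ∃ s, n * deriv φ s = k := by
    intro k hk
    rw [hKdef, Finset.mem_Icc, Int.ceil_le, Int.le_floor] at hk
    have hmem : (k / n : ℝ) ∈ Icc (deriv φ x) (deriv φ y) := by
      constructor
      · rw [le_div_iff₀ hnpos]; linarith [hk.1]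
      · rw [div_le_iff₀ hnpos]; linarith [hk.2]
    obtain ⟨s, hs⟩ := mem_range_of_exists_le_of_exists_ge hdc ⟨x, hmem.1⟩ ⟨y, hmem.2⟩
    exact ⟨s, by rw [hs]; field_simp⟩
  have hcard := count_bound p hp1 hp2 φ hφ_C1.continuous hφ_circ B hB η δ₀ hη0 hδ hb n N h3 hn3 hN2 K hK
  rw [← hD, ← hX] at hcard
  have hcard2 : n * g - 1 ≤ (K.card : ℝ) := by
    rw [hKdef, Int.card_Icc]
    have h5 : (⌊n * β⌋ + 1 - ⌈n * α⌉ : ℤ) ≤ ((⌊n * β⌋ + 1 - ⌈n * α⌉).toNat : ℤ) := Int.self_le_toNat _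
    have h6 : ((⌊n * β⌋ + 1 - ⌈n * α⌉ : ℤ) : ℝ) ≤ ((⌊n * β⌋ + 1 - ⌈n * α⌉).toNat : ℝ) := by exact_mod_cast h5
    refine le_trans ?_ h6
    push_cast
    have h7 := Int.lt_floor_add_one (n * β)
    have h8 := Int.ceil_lt_add_one (n * α)
    rw [hg, mul_sub]
    linarith
  have h9 : n * g / 2 ≤ 100 * D * X := by linarith
  have h10 : X / (48 * η) * g / 2 ≤ 100 * D * X := by
    refine le_trans ?_ h9
    gcongr
  have h11 : X / (48 * η) * g / 2 = X * (10000 / 96 * (D + 1)) := by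
    rw [hη]; field_simp; ring
  have hXp : 0 < X := by
    have : (0 : ℝ) < N := by exact_mod_cast h3
    positivity
  rw [h11] at h10
  nlinarith [mul_nonneg hXp.le hD0]

/-- Beurling–Helson type theorem for A_p: if ω(δ) = o(δ^{p−1}) and a
C^{1,ω}-smooth circle map φ satisfies sup_n ‖e^{inφ}‖_{A_p} < ∞, then φ is linear:
φ(t) = m·t + t₀ with m ∈ ℤ. -/
theorem statement18
    (p : ℝ) (hp1 : 1 < p) (hp2 : p < 2)
    (ω : ℝ → ℝ)
    (hω_cont : ContinuousOn ω (Ici 0)) (hω_mono : MonotoneOn ω (Ici 0))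
    (hω_zero : ω 0 = 0) (hω_pos : ∀ δ : ℝ, 0 < δ → 0 < ω δ)
    -- ω(δ) = o(δ^{p−1}) as δ → +0
    (hω_little_o : ∀ ε : ℝ, 0 < ε → ∃ δ₀ : ℝ, 0 < δ₀ ∧
      ∀ δ : ℝ, 0 < δ → δ < δ₀ → ω δ ≤ ε * δ ^ (p - 1))
    (φ : ℝ → ℝ)
    -- φ is a map of the circle into itself
    (hφ_circ : ∀ t : ℝ, ∃ k : ℤ, φ (t + 2 * Real.pi) - φ t = 2 * Real.pi * k)
    (hφ_C1 : ContDiff ℝ 1 φ)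
    (hφ_lip : ∃ C : ℝ, 0 < C ∧ ∀ s t : ℝ, |deriv φ s - deriv φ t| ≤ C * ω |s - t|)
    -- φ acts from A to A_p: sup_n ‖e^{inφ}‖_{A_p} < ∞
    (hφ_bdd : ∃ B : ℝ, ∀ n : ℤ,
      ApNorm p (fun t => Complex.exp (Complex.I * (n : ℂ) * (φ t : ℂ))) ≤
        ENNReal.ofReal B) :
    ∃ (m : ℤ) (t₀ : ℝ), ∀ t : ℝ, φ t = (m : ℝ) * t + t₀ := by
  obtain ⟨B, hB⟩ := hφ_bdd
  have hT := taylor_bound p hp1 ω hω_little_o φ hφ_C1 hφ_lip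
  have hne := deriv_const_aux p hp1 hp2 φ hφ_C1 hφ_circ B hB hT
  have hconst : ∀ t, deriv φ t = deriv φ 0 := fun t =>
    le_antisymm (not_lt.mp (hne 0 t)) (not_lt.mp (hne t 0))
  have hdiff : Differentiable ℝ φ := hφ_C1.differentiable (by norm_num)
  have hlin : ∀ t, φ t = deriv φ 0 * t + φ 0 := by
    intro t
    have hd : ∀ z, HasDerivAt (fun z => φ z - deriv φ 0 * z) 0 z := by
      intro z
      have h2 := ((hdiff z).hasDerivAt.sub ((hasDerivAt_id z).const_mul (deriv φ 0)))
      simp only [mul_one, hconst z, sub_self] at h2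
      exact h2
    have h3 := is_const_of_deriv_eq_zero (fun z => (hd z).differentiableAt)
      (fun z => (hd z).deriv) t 0
    simp only [mul_zero, sub_zero] at h3
    linarith
  obtain ⟨k, hk⟩ := hφ_circ 0
  rw [zero_add, hlin (2 * Real.pi)] at hk
  have hkk : deriv φ 0 = k := by
    have : (2 * Real.pi) * deriv φ 0 = 2 * Real.pi * k := by linarith
    exact mul_left_cancel₀ (by positivity) this
  exact ⟨k, φ 0, fun t => by rw [hlin t, hkk]⟩
end

section
/- Let 1 < p < 2 and ε > 0 with p − 1 − ε > 0. There exists a nowhere linear C^{1,p−1−ε}-diffeomorphism h of the circle 𝕋 (i.e., h′ satisfies a Lipschitz condition of order p−1−ε) such that sup_{n∈ℤ} ‖e^{inh}‖_{A_p(𝕋)} < ∞; consequently, the superposition operator f ↦ f∘h is bounded from A(𝕋) to A_p(𝕋). -/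
open MeasureTheory Real Set
open scoped ENNReal

/-- iterates to the Cantor function -/
noncomputable def cIter (r : ℝ) : ℕ → ℝ → ℝ
  | 0 => fun u => max 0 (min 1 u)
  | (m+1) => fun u => (cIter r m (u / r) + cIter r m ((u - 1 + r) / r)) / 2

lemma cIter_zero {r : ℝ} (h0 : 0 < r) (h1 : r < 1/2) (m : ℕ) : ∀ u ≤ 0, cIter r m u = 0 := by
  induction m with
  | zero => intro u hu; simp [cIter, hu]
  | succ m ih =>
    intro u hu
    have a : u / r ≤ 0 := div_nonpos_of_nonpos_of_nonneg hu h0.le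
    have b : (u - 1 + r) / r ≤ 0 := div_nonpos_of_nonpos_of_nonneg (by linarith) h0.le
    simp [cIter, ih _ a, ih _ b]

lemma cIter_one {r : ℝ} (h0 : 0 < r) (h1 : r < 1/2) (m : ℕ) : ∀ u, 1 ≤ u → cIter r m u = 1 := by
  induction m with
  | zero => intro u hu; simp [cIter, hu]
  | succ m ih =>
    intro u hu
    have a : 1 ≤ u / r := by rw [le_div_iff₀ h0]; linarith
    have b : 1 ≤ (u - 1 + r) / r := by rw [le_div_iff₀ h0]; linarith
    simp [cIter, ih _ a, ih _ b]

lemma cIter_mono {r : ℝ} (h0 : 0 < r) (m : ℕ) : Monotone (cIter r m) := by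
  induction m with
  | zero => intro u v h; simp only [cIter]; gcongr
  | succ m ih =>
    intro u v h
    have a := @ih (u / r) (v / r) (by gcongr)
    have b := @ih ((u - 1 + r) / r) ((v - 1 + r) / r) (by gcongr)
    simp only [cIter]; linarith

lemma cIter_holder {r α C : ℝ} (h0 : 0 < r) (h1 : r < 1/2) (hα : 0 < α) (hα1 : α < 1)
    (hr : r ^ α = 1/2) (hC1 : 1 ≤ C) (hC : 1 ≤ C * (1 - 2 * r) ^ α) (m : ℕ) :
    ∀ s t, s ≤ t → cIter r m t - cIter r m s ≤ C * (t - s) ^ α := by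
  have bd : ∀ m u, 0 ≤ cIter r m u ∧ cIter r m u ≤ 1 := by
    intro m u
    constructor
    · rcases le_total u 0 with h | h
      · rw [cIter_zero h0 h1 m u h]
      · rw [← cIter_zero h0 h1 m 0 le_rfl]; exact cIter_mono h0 m h
    · rcases le_total 1 u with h | h
      · rw [cIter_one h0 h1 m u h]
      · rw [← cIter_one h0 h1 m 1 le_rfl]; exact cIter_mono h0 m h
  induction m with
  | zero =>
    intro s t hst
    have h2 : cIter r 0 t - cIter r 0 s ≤ min 1 (t - s) := by
      refine le_min (by linarith [(bd 0 t).2, (bd 0 s).1]) ?_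
      simp only [cIter]
      rcases max_cases 0 (min 1 t) with h | h <;> rcases max_cases 0 (min 1 s) with h' | h' <;>
      rcases min_cases 1 t with k | k <;> rcases min_cases 1 s with k' | k' <;> linarith
    refine h2.trans ?_
    have h3 : min 1 (t - s) ≤ (t - s) ^ α := by
      rcases le_total 1 (t - s) with h | h
      · exact (min_le_left _ _).trans (Real.one_le_rpow h hα.le)
      · refine (min_le_right _ _).trans ?_
        exact Real.self_le_rpow_of_le_one (by linarith) h hα1.le
    have : 0 ≤ (t - s) ^ α := Real.rpow_nonneg (by linarith) _
    nlinarith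
  | succ m ih =>
    intro s t hst
    have sc : ∀ x y : ℝ, x ≤ y → ((y / r) - (x / r)) ^ α = 2 * (y - x) ^ α := by
      intro x y hxy
      rw [← sub_div, Real.div_rpow (by linarith) h0.le, hr]; ring
    have A := ih (s / r) (t / r) (by gcongr)
    have B := ih ((s - 1 + r) / r) ((t - 1 + r) / r) (by gcongr)
    rw [sc _ _ hst] at A
    rw [sc _ _ (by linarith)] at B
    have e : t - 1 + r - (s - 1 + r) = t - s := by ring
    rw [e] at B
    by_cases c1 : t ≤ 1 - r
    · have z1 := cIter_zero h0 h1 m ((t - 1 + r) / r)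
        (div_nonpos_of_nonpos_of_nonneg (by linarith) h0.le)
      have z2 := cIter_zero h0 h1 m ((s - 1 + r) / r)
        (div_nonpos_of_nonpos_of_nonneg (by linarith) h0.le)
      simp only [cIter]; rw [z1, z2]; linarith
    · by_cases c2 : r ≤ s
      · have z1 := cIter_one h0 h1 m (t / r) (by rw [le_div_iff₀ h0]; linarith)
        have z2 := cIter_one h0 h1 m (s / r) (by rw [le_div_iff₀ h0]; linarith)
        simp only [cIter]; rw [z1, z2]; linarith
      · push Not at c1 c2
        have := bd (m+1) t
        have := bd (m+1) s
        have h5 : (1 - 2 * r) ^ α ≤ (t - s) ^ α :=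
          Real.rpow_le_rpow (by linarith) (by linarith) hα.le
        nlinarith

lemma cIter_cauchy {r : ℝ} (h0 : 0 < r) (h1 : r < 1/2) (m : ℕ) :
    ∀ u, |cIter r m u - cIter r (m+1) u| ≤ 1 / 2 ^ m := by
  have bd : ∀ m u, 0 ≤ cIter r m u ∧ cIter r m u ≤ 1 := by
    intro m u
    constructor
    · rcases le_total u 0 with h | h
      · rw [cIter_zero h0 h1 m u h]
      · rw [← cIter_zero h0 h1 m 0 le_rfl]; exact cIter_mono h0 m h
    · rcases le_total 1 u with h | h
      · rw [cIter_one h0 h1 m u h]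
      · rw [← cIter_one h0 h1 m 1 le_rfl]; exact cIter_mono h0 m h
  induction m with
  | zero =>
    intro u
    have := bd 0 u
    have := bd 1 u
    rw [abs_le]; norm_num; constructor <;> linarith
  | succ m ih =>
    intro u
    have A := ih (u / r)
    have B := ih ((u - 1 + r) / r)
    have e : (1:ℝ) / 2 ^ (m+1) = 1 / 2 ^ m / 2 := by rw [pow_succ]; field_simp
    rw [e]
    have d1 : cIter r (m+1) u = (cIter r m (u / r) + cIter r m ((u - 1 + r) / r)) / 2 := rfl
    have d2 : cIter r (m+1+1) u = (cIter r (m+1) (u / r) + cIter r (m+1) ((u - 1 + r) / r)) / 2 :=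
      rfl
    rw [d1, d2]
    rw [abs_le] at *
    by_cases c1 : u ≤ 1 - r
    · have hz : (u - 1 + r) / r ≤ 0 := div_nonpos_of_nonpos_of_nonneg (by linarith) h0.le
      rw [cIter_zero h0 h1 m _ hz, cIter_zero h0 h1 (m+1) _ hz]
      constructor <;> linarith
    · have hz : 1 ≤ u / r := by rw [le_div_iff₀ h0]; linarith
      rw [cIter_one h0 h1 m _ hz, cIter_one h0 h1 (m+1) _ hz]
      constructor <;> linarith

structure IsCantor (r α : ℝ) (Φ : ℝ → ℝ) : Prop where
  r0 : 0 < r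
  r1 : r < 1/2
  mono : Monotone Φ
  zero : ∀ u ≤ 0, Φ u = 0
  one : ∀ u, 1 ≤ u → Φ u = 1
  eqn : ∀ u, Φ u = (Φ (u / r) + Φ ((u - 1 + r) / r)) / 2
  holder : ∃ C, 0 < C ∧ ∀ s t, |Φ s - Φ t| ≤ C * |s - t| ^ α

lemma exists_cantor {r α : ℝ} (h0 : 0 < r) (h1 : r < 1/2) (hα : 0 < α) (hα1 : α < 1)
    (hr : r ^ α = 1/2) : ∃ Φ, IsCantor r α Φ := by
  have hc : ∀ u, ∃ l, Filter.Tendsto (fun m => cIter r m u) Filter.atTop (nhds l) := by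
    intro u
    apply cauchySeq_tendsto_of_complete
    refine cauchySeq_of_le_geometric (1/2) 1 (by norm_num) ?_
    intro m
    rw [Real.dist_eq]
    refine (cIter_cauchy h0 h1 m u).trans (le_of_eq ?_)
    rw [one_div_pow, one_mul]
  choose Φ hΦ using hc
  have hpos : 0 < (1 - 2 * r) ^ α := Real.rpow_pos_of_pos (by linarith) _
  have hmono : Monotone Φ := fun u v h =>
    le_of_tendsto_of_tendsto' (hΦ u) (hΦ v) (fun m => cIter_mono h0 m h)
  refine ⟨Φ, h0, h1, hmono, ?_, ?_, ?_, ?_⟩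
  · intro u hu
    refine tendsto_nhds_unique (hΦ u) ?_
    simp [cIter_zero h0 h1 _ u hu]
  · intro u hu
    refine tendsto_nhds_unique (hΦ u) ?_
    simp [cIter_one h0 h1 _ u hu]
  · intro u
    refine tendsto_nhds_unique ((Filter.tendsto_add_atTop_iff_nat 1).2 (hΦ u)) ?_
    exact ((hΦ _).add (hΦ _)).div_const 2
  · set C := max 1 (1 / (1 - 2 * r) ^ α)
    have hC : 1 ≤ C * (1 - 2 * r) ^ α := by
      rw [← div_le_iff₀ hpos]; exact le_max_right _ _
    have key : ∀ s t, s ≤ t → Φ t - Φ s ≤ C * (t - s) ^ α := by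
      intro s t hst
      exact le_of_tendsto' ((hΦ t).sub (hΦ s))
        (fun m => cIter_holder h0 h1 hα hα1 hr (le_max_left _ _) hC m s t hst)
    refine ⟨C, lt_of_lt_of_le one_pos (le_max_left _ _), ?_⟩
    intro s t
    rcases le_total s t with h | h
    · rw [abs_sub_comm, abs_sub_comm s t, abs_of_nonneg (sub_nonneg.2 (hmono h)),
        abs_of_nonneg (sub_nonneg.2 h)]
      exact key s t h
    · rw [abs_of_nonneg (sub_nonneg.2 (hmono h)), abs_of_nonneg (sub_nonneg.2 h)]
      exact key t s h

lemma continuous_of_holder {f : ℝ → ℝ} {C α : ℝ} (hα : 0 < α)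
    (h : ∀ s t, |f s - f t| ≤ C * |s - t| ^ α) : Continuous f := by
  rw [continuous_iff_continuousAt]
  intro t
  rw [ContinuousAt, tendsto_iff_dist_tendsto_zero]
  refine squeeze_zero (fun _ => dist_nonneg) (fun s => h s t) ?_
  have : Filter.Tendsto (fun s : ℝ => C * |s - t| ^ α) (nhds t) (nhds (C * |t - t| ^ α)) := by
    apply Continuous.tendsto
    have : Continuous fun s : ℝ => |s - t| ^ α :=
      (by fun_prop : Continuous fun s : ℝ => |s - t|).rpow_const (fun _ => Or.inr hα.le)
    fun_prop
  simpa [Real.zero_rpow hα.ne'] using this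

def DenseFlat (D : ℝ → ℝ) : Prop :=
  ∀ a b, a < b → ∃ a' b' c, a ≤ a' ∧ a' < b' ∧ b' ≤ b ∧ ∀ t ∈ Icc a' b', D t = c

lemma IsCantor.mid {r α : ℝ} {Φ : ℝ → ℝ} (h : IsCantor r α Φ) {u : ℝ} (h1 : r ≤ u)
    (h2 : u ≤ 1 - r) : Φ u = 1/2 := by
  have hr := h.r0
  rw [h.eqn, h.one _ (by rw [le_div_iff₀ hr]; linarith),
    h.zero _ (div_nonpos_of_nonpos_of_nonneg (by linarith) hr.le)]; norm_num

lemma IsCantor.left {r α : ℝ} {Φ : ℝ → ℝ} (h : IsCantor r α Φ) {u : ℝ} 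
    (h2 : u ≤ r) : Φ u = Φ (u / r) / 2 := by
  have hr := h.r0
  have hr1 := h.r1
  rw [h.eqn, h.zero ((u - 1 + r) / r) (div_nonpos_of_nonpos_of_nonneg (by linarith) hr.le)]; simp

lemma IsCantor.right {r α : ℝ} {Φ : ℝ → ℝ} (h : IsCantor r α Φ) {u : ℝ} 
    (h2 : 1 - r ≤ u) : Φ u = (1 + Φ ((u - 1 + r) / r)) / 2 := by
  have hr := h.r0
  have hr1 := h.r1
  rw [h.eqn, h.one (u / r) (by rw [le_div_iff₀ hr]; linarith)]

lemma IsCantor.denseFlat {r α : ℝ} {Φ : ℝ → ℝ} (h : IsCantor r α Φ) : DenseFlat Φ := by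
  have hr := h.r0
  have hr1 := h.r1
  have key : ∀ m : ℕ, ∀ a b, r ^ m < b - a →
      ∃ a' b' c, a ≤ a' ∧ a' < b' ∧ b' ≤ b ∧ ∀ t ∈ Icc a' b', Φ t = c := by
    intro m
    induction m with
    | zero =>
      intro a b hab
      rw [pow_zero] at hab
      by_cases ha : a < 0
      · exact ⟨a, min 0 b, 0, le_rfl, lt_min ha (by linarith), min_le_right _ _,
          fun t ht => h.zero t (ht.2.trans (min_le_left _ _))⟩
      · push Not at ha
        exact ⟨1 + a, b, 1, by linarith, by linarith, le_rfl, fun t ht => h.one t (by linarith [ht.1])⟩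
    | succ m ih =>
      intro a b hab
      have hrm : 0 < r ^ (m+1) := by positivity
      have hlt : a < b := by linarith
      rw [pow_succ] at hab
      by_cases c1 : b ≤ r
      · obtain ⟨a', b', c, h1, h2, h3, h4⟩ := ih (a / r) (b / r)
          (by rw [← sub_div, lt_div_iff₀ hr]; exact hab)
        rw [div_le_iff₀ hr] at h1
        rw [le_div_iff₀ hr] at h3
        refine ⟨a' * r, b' * r, c / 2, h1, by gcongr, h3, fun t ht => ?_⟩
        rw [h.left (by linarith [ht.2]), h4]
        exact ⟨by rw [le_div_iff₀ hr]; exact ht.1, by rw [div_le_iff₀ hr]; exact ht.2⟩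
      · by_cases c2 : 1 - r ≤ a
        · obtain ⟨a', b', c, h1, h2, h3, h4⟩ := ih ((a - 1 + r) / r) ((b - 1 + r) / r)
            (by rw [← sub_div, lt_div_iff₀ hr]; linarith)
          rw [div_le_iff₀ hr] at h1
          rw [le_div_iff₀ hr] at h3
          have : a' * r < b' * r := by gcongr
          refine ⟨a' * r + 1 - r, b' * r + 1 - r, (1 + c) / 2, by linarith, by linarith,
            by linarith, fun t ht => ?_⟩
          rw [h.right (by linarith [ht.1]), h4]
          exact ⟨by rw [le_div_iff₀ hr]; linarith [ht.1], by rw [div_le_iff₀ hr]; linarith [ht.2]⟩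
        · push Not at c1 c2
          refine ⟨max a r, min b (1 - r), 1/2, le_max_left _ _, ?_, min_le_left _ _, fun t ht => ?_⟩
          · exact max_lt (lt_min hlt c2) (lt_min c1 (by linarith))
          · exact h.mid ((le_max_right _ _).trans ht.1) (ht.2.trans (min_le_right _ _))
  intro a b hab
  obtain ⟨m, hm⟩ := exists_pow_lt_of_lt_one (sub_pos.2 hab) (by linarith : r < 1)
  exact key m a b hm

lemma telescope_bound {E : ℝ → ℂ} {γ : ℝ → ℝ} {A a b : ℝ} (hab : a ≤ b)
    (h : ∀ c d, c ≤ d → ‖E d - E c‖ ≤ (γ d - γ c) * (A * (d - c) + 1)) :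
    ‖E b - E a‖ ≤ γ b - γ a := by
  have key : ∀ N : ℕ, 0 < N → ‖E b - E a‖ ≤ (γ b - γ a) * (A * (b - a) * (1 / N) + 1) := by
    intro N hN
    have hN' : (0:ℝ) < N := by exact_mod_cast hN
    set t : ℕ → ℝ := fun i => a + (b - a) * (i / N) with ht
    have ht0 : t 0 = a := by simp [ht]
    have htN : t N = b := by simp [ht, hN'.ne']
    have e1 : E b - E a = ∑ i ∈ Finset.range N, (E (t (i+1)) - E (t i)) := by
      rw [Finset.sum_range_sub (fun i => E (t i)), ht0, htN]
    have e2 : γ b - γ a = ∑ i ∈ Finset.range N, (γ (t (i+1)) - γ (t i)) := by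
      rw [Finset.sum_range_sub (fun i => γ (t i)), ht0, htN]
    rw [e1, e2, Finset.sum_mul]
    refine (norm_sum_le _ _).trans (Finset.sum_le_sum fun i _ => ?_)
    have d : t (i+1) - t i = (b - a) * (1 / N) := by
      simp only [ht]; push_cast; field_simp; ring
    have := h (t i) (t (i+1)) (by
      rw [← sub_nonneg, d]; exact mul_nonneg (sub_nonneg.2 hab) (by positivity))
    rw [d] at this
    rw [mul_assoc]; exact this
  have lim : Filter.Tendsto (fun N : ℕ => (γ b - γ a) * (A * (b - a) * (1 / ((N:ℝ) + 1)) + 1))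
      Filter.atTop (nhds ((γ b - γ a) * (A * (b - a) * 0 + 1))) :=
    ((tendsto_one_div_add_atTop_nhds_zero_nat.const_mul _).add_const _).const_mul _
  rw [mul_zero, zero_add, mul_one] at lim
  refine ge_of_tendsto' lim (fun N => ?_)
  have := key (N+1) (Nat.succ_pos _)
  simpa using this

lemma norm_exp_I (x : ℝ) : ‖Complex.exp (Complex.I * (x:ℂ))‖ = 1 := by
  rw [mul_comm]; exact Complex.norm_exp_ofReal_mul_I x

lemma vdc_pos {θ φ : ℝ → ℝ} {A δ a b : ℝ} (hθ : ∀ u, HasDerivAt θ (φ u) u) (hφ : Continuous φ)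
    (hm : Monotone φ ∨ Antitone φ) (hδ : 0 < δ) (h1 : ∀ u, δ ≤ φ u) (h2 : ∀ u, φ u ≤ A)
    (hab : a ≤ b) :
    ‖∫ u in a..b, Complex.exp (Complex.I * (θ u : ℂ))‖ ≤ 3 / δ := by
  have hθc : Continuous θ := continuous_iff_continuousAt.2 fun u => (hθ u).continuousAt
  have pos : ∀ u, 0 < φ u := fun u => hδ.trans_le (h1 u)
  set e : ℝ → ℂ := fun u => Complex.exp (Complex.I * (θ u : ℂ)) with he
  have hec : Continuous e := by simp only [he]; fun_prop
  have hed : ∀ u, HasDerivAt e (Complex.I * (φ u : ℂ) * e u) u := by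
    intro u
    have := (((hθ u).ofReal_comp).const_mul Complex.I).cexp
    convert this using 1
    simp only [he]; ring
  have hen : ∀ u, ‖e u‖ = 1 := fun u => norm_exp_I _
  have heint : ∀ c d, ∫ u in c..d, Complex.I * (φ u : ℂ) * e u = e d - e c := by
    intro c d
    refine intervalIntegral.integral_eq_sub_of_hasDerivAt (fun u _ => hed u) ?_
    apply Continuous.intervalIntegrable; fun_prop
  set g : ℝ → ℝ := fun u => 1 / φ u with hg
  set E : ℝ → ℂ := fun c => (∫ u in a..c, e u) - (g c : ℂ) * e c / Complex.I with hE
  have hgm : Antitone g ∨ Monotone g := by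
    rcases hm with hm | hm
    · left; intro u v huv; exact one_div_le_one_div_of_le (pos u) (hm huv)
    · right; intro u v huv; exact one_div_le_one_div_of_le (pos v) (hm huv)
  have step : ∀ c d, c ≤ d → ‖E d - E c‖ ≤ |g d - g c| * (A * (d - c) + 1) := by
    intro c d hcd
    have i1 : (∫ u in a..d, e u) = (∫ u in a..c, e u) + ∫ u in c..d, e u :=
      (intervalIntegral.integral_add_adjacent_intervals (hec.intervalIntegrable _ _)
        (hec.intervalIntegrable _ _)).symm
    have i2 : ∫ u in c..d, e u = (∫ u in c..d, ((1 - g c * φ u : ℝ) : ℂ) * e u)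
        + (g c : ℂ) / Complex.I * (e d - e c) := by
      rw [← heint c d, ← intervalIntegral.integral_const_mul, ← intervalIntegral.integral_add]
      · congr 1; ext u
        push_cast
        field_simp
        ring
      · apply Continuous.intervalIntegrable; fun_prop
      · apply Continuous.intervalIntegrable; fun_prop
    have i3 : E d - E c = (∫ u in c..d, ((1 - g c * φ u : ℝ) : ℂ) * e u)
        + ((g c - g d : ℝ) : ℂ) * e d / Complex.I := by
      simp only [hE]; rw [i1, i2]; push_cast; ring
    have i4 : ‖∫ u in c..d, ((1 - g c * φ u : ℝ) : ℂ) * e u‖ ≤ (|g d - g c| * A) * |d - c| := by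
      apply intervalIntegral.norm_integral_le_of_norm_le_const
      intro u hu
      rw [uIoc_of_le hcd] at hu
      rw [norm_mul, hen, mul_one, Complex.norm_real, Real.norm_eq_abs]
      have : 1 - g c * φ u = (g u - g c) * φ u := by
        simp only [hg]; have := (pos u).ne'; field_simp
      rw [this, abs_mul, abs_of_pos (pos u)]
      have h3 : |g u - g c| ≤ |g d - g c| := by
        rcases hgm with hgm | hgm
        · have := hgm hu.1.le; have := hgm hu.2
          rw [abs_of_nonpos (by linarith), abs_of_nonpos (by linarith)]; linarith
        · have := hgm hu.1.le; have := hgm hu.2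
          rw [abs_of_nonneg (by linarith), abs_of_nonneg (by linarith)]; linarith
      exact mul_le_mul h3 (h2 u) (pos u).le (abs_nonneg _)
    rw [i3]
    refine (norm_add_le _ _).trans ?_
    rw [abs_of_nonneg (sub_nonneg.2 hcd)] at i4
    have : ‖((g c - g d : ℝ) : ℂ) * e d / Complex.I‖ = |g d - g c| := by
      rw [norm_div, norm_mul, hen, Complex.norm_real, Complex.norm_I, Real.norm_eq_abs,
        abs_sub_comm]; simp
    rw [this]; linarith
  have gb : ∀ u, 0 < g u ∧ g u ≤ 1 / δ := fun u =>
    ⟨one_div_pos.2 (pos u), one_div_le_one_div_of_le hδ (h1 u)⟩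
  have fin : ‖E b - E a‖ ≤ 1 / δ := by
    have ga := gb a
    have gb' := gb b
    rcases hgm with hgm | hgm
    · have := telescope_bound (E := E) (γ := fun u => - g u) (A := A) hab (fun c d hcd => by
        have := step c d hcd
        have hh := hgm hcd
        rw [abs_of_nonpos (by linarith)] at this
        convert this using 2; ring)
      linarith
    · have := telescope_bound (E := E) (γ := g) (A := A) hab (fun c d hcd => by
        have := step c d hcd
        have hh := hgm hcd
        rwa [abs_of_nonneg (by linarith)] at this)
      linarith
  have gn : ∀ u, ‖(g u : ℂ) * e u / Complex.I‖ ≤ 1 / δ := by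
    intro u
    rw [norm_div, norm_mul, hen, Complex.norm_real, Complex.norm_I, Real.norm_eq_abs,
      abs_of_pos (gb u).1]; simpa using (gb u).2
  have : (∫ u in a..b, e u) = (E b - E a) + (g b : ℂ) * e b / Complex.I
      - (g a : ℂ) * e a / Complex.I := by
    simp only [hE, intervalIntegral.integral_same]; ring
  rw [this]
  calc _ ≤ ‖E b - E a‖ + ‖(g b : ℂ) * e b / Complex.I‖ + ‖(g a : ℂ) * e a / Complex.I‖ :=
        (norm_sub_le _ _).trans (add_le_add_left (norm_add_le _ _) _)
    _ ≤ 1 / δ + 1 / δ + 1 / δ := by gcongr <;> apply gn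
    _ = 3 / δ := by ring

lemma conj_int (θ : ℝ → ℝ) (a b : ℝ) :
    ‖∫ u in a..b, Complex.exp (Complex.I * ((-θ u : ℝ) : ℂ))‖
     = ‖∫ u in a..b, Complex.exp (Complex.I * (θ u : ℂ))‖ := by
  rw [intervalIntegral.intervalIntegral_eq_integral_uIoc,
    intervalIntegral.intervalIntegral_eq_integral_uIoc, norm_smul, norm_smul]
  congr 1
  rw [← Complex.norm_conj, ← integral_conj]
  congr 2; ext u
  rw [← Complex.exp_conj]; simp

lemma vdc_neg {θ φ : ℝ → ℝ} {A δ a b : ℝ} (hθ : ∀ u, HasDerivAt θ (φ u) u) (hφ : Continuous φ)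
    (hm : Monotone φ ∨ Antitone φ) (hδ : 0 < δ) (h1 : ∀ u, φ u ≤ -δ) (h2 : ∀ u, -A ≤ φ u)
    (hab : a ≤ b) :
    ‖∫ u in a..b, Complex.exp (Complex.I * (θ u : ℂ))‖ ≤ 3 / δ := by
  rw [← conj_int]
  refine vdc_pos (θ := fun u => - θ u) (φ := fun u => - φ u) (A := A) (fun u => (hθ u).neg) hφ.neg ?_ hδ
    (fun u => by linarith [h1 u]) (fun u => by linarith [h2 u]) hab
  rcases hm with hm | hm
  · right; intro u v h; simpa using hm h
  · left; intro u v h; simpa using hm h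

noncomputable def prim (Φ : ℝ → ℝ) (u : ℝ) : ℝ := ∫ v in (0:ℝ)..u, Φ v

noncomputable def oscF (Φ : ℝ → ℝ) (x ω : ℝ) : ℂ :=
  ∫ u in (0:ℝ)..1, Complex.exp (Complex.I * ((x * prim Φ u - ω * u : ℝ) : ℂ))

lemma prim_hasDeriv {Φ : ℝ → ℝ} (hc : Continuous Φ) (u : ℝ) : HasDerivAt (prim Φ) (Φ u) u :=
  intervalIntegral.integral_hasDerivAt_right (hc.intervalIntegrable _ _)
    (hc.stronglyMeasurableAtFilter _ _) hc.continuousAt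

lemma prim_cont {Φ : ℝ → ℝ} (hc : Continuous Φ) : Continuous (prim Φ) :=
  continuous_iff_continuousAt.2 fun u => (prim_hasDeriv hc u).continuousAt

lemma prim_zero (Φ : ℝ → ℝ) : prim Φ 0 = 0 := by simp [prim]

/-- equality from derivative equality -/
lemma eq_of_deriv {f g φ : ℝ → ℝ} (hf : ∀ u, HasDerivAt f (φ u) u)
    (hg : ∀ u, HasDerivAt g (φ u) u) (h0 : f 0 = g 0) : f = g := by
  have h : ∀ u, HasDerivAt (fun u => f u - g u) 0 u := fun u => by
    simpa using (hf u).fun_sub (hg u)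
  funext u
  have := is_const_of_deriv_eq_zero (fun u => (h u).differentiableAt) (fun u => (h u).deriv) u 0
  simp only [h0, sub_self] at this
  linarith

namespace IsCantor
variable {r α : ℝ} {Φ : ℝ → ℝ}

lemma le_one (h : IsCantor r α Φ) (u : ℝ) : Φ u ≤ 1 := by
  rcases le_total 1 u with k | k
  · rw [h.one u k]
  · rw [← h.one 1 le_rfl]; exact h.mono k

lemma nonneg (h : IsCantor r α Φ) (u : ℝ) : 0 ≤ Φ u := by
  rcases le_total u 0 with k | k
  · rw [h.zero u k]
  · rw [← h.zero 0 le_rfl]; exact h.mono k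

lemma prim_neg (h : IsCantor r α Φ) {u : ℝ} (hu : u ≤ 0) : prim Φ u = 0 := by
  rw [prim, intervalIntegral.integral_symm, intervalIntegral.integral_congr (g := fun _ => (0:ℝ))]
  · simp
  · intro v hv
    rw [uIcc_of_le hu] at hv
    exact h.zero v hv.2

lemma prim_one (h : IsCantor r α Φ) (hc : Continuous Φ) {u : ℝ} (hu : 1 ≤ u) :
    prim Φ u = prim Φ 1 + (u - 1) := by
  rw [prim, prim, ← intervalIntegral.integral_add_adjacent_intervals (hc.intervalIntegrable 0 1)
    (hc.intervalIntegrable 1 u)]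
  congr 1
  rw [intervalIntegral.integral_congr (g := fun _ => (1:ℝ))]
  · simp
  · intro v hv
    rw [uIcc_of_le hu] at hv
    exact h.one v hv.1

lemma prim_eqn (h : IsCantor r α Φ) (hc : Continuous Φ) (u : ℝ) :
    prim Φ u = r / 2 * (prim Φ (u / r) + prim Φ ((u - 1 + r) / r)) := by
  have hr := h.r0
  have hr1 := h.r1
  have := eq_of_deriv (f := prim Φ) (φ := Φ)
    (g := fun u => r / 2 * (prim Φ (u / r) + prim Φ ((u - 1 + r) / r))) (prim_hasDeriv hc) ?_ ?_
  · exact congrFun this u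
  · intro u
    have a := (prim_hasDeriv hc (u / r)).comp u ((hasDerivAt_id u).div_const r)
    have b := (prim_hasDeriv hc ((u - 1 + r) / r)).comp u
      ((((hasDerivAt_id u).sub_const 1).add_const r).div_const r)
    refine ((a.fun_add b).const_mul (r / 2)).congr_deriv ?_
    rw [h.eqn u]; field_simp
  · simp only [prim_zero, zero_div]
    rw [h.prim_neg (div_nonpos_of_nonpos_of_nonneg (by linarith) hr.le)]; simp

lemma oscF_split (h : IsCantor r α Φ) (hc : Continuous Φ) (x ω : ℝ) :
    ∃ z₁ z₂ : ℂ, ∃ c : ℝ, ‖z₁‖ = r ∧ ‖z₂‖ = r ∧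
      oscF Φ x ω = z₁ * oscF Φ (x * r / 2) (r * ω)
        + (∫ u in r..(1 - r), Complex.exp (Complex.I * ((c + (x / 2 - ω) * u : ℝ) : ℂ)))
        + z₂ * oscF Φ (x * r / 2) (r * (ω - x / 2)) := by
  have hr := h.r0
  have hr1 := h.r1
  have hp := prim_cont hc
  set f : ℝ → ℂ := fun u => Complex.exp (Complex.I * ((x * prim Φ u - ω * u : ℝ) : ℂ)) with hf
  have fc : Continuous f := by simp only [hf]; fun_prop
  set c : ℝ := x * (r / 2 * (prim Φ 1 - 1)) with hcdef
  set d : ℝ := c + x / 2 * (1 - r) - ω * (1 - r) with hd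
  refine ⟨r, r * Complex.exp (Complex.I * (d : ℂ)), c, ?_, ?_, ?_⟩
  · simp [abs_of_pos hr]
  · rw [norm_mul, norm_exp_I]; simp [abs_of_pos hr]
  have e0 : oscF Φ x ω = (∫ u in (0:ℝ)..r, f u) + (∫ u in r..(1-r), f u) + ∫ u in (1-r)..1, f u := by
    rw [intervalIntegral.integral_add_adjacent_intervals (fc.intervalIntegrable _ _)
      (fc.intervalIntegrable _ _), intervalIntegral.integral_add_adjacent_intervals
      (fc.intervalIntegrable _ _) (fc.intervalIntegrable _ _)]
    rfl
  rw [e0]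
  congr 1
  · congr 1
    · have : ∫ u in (0:ℝ)..r, f u = ∫ u in (r * 0)..(r * 1), f u := by simp
      rw [this, ← intervalIntegral.smul_integral_comp_mul_left, oscF, Complex.real_smul]
      congr 1
      apply intervalIntegral.integral_congr
      intro v hv
      rw [uIcc_of_le zero_le_one] at hv
      simp only [hf]
      have : prim Φ (r * v) = r / 2 * prim Φ v := by
        rw [h.prim_eqn hc, h.prim_neg (u := (r * v - 1 + r) / r) (div_nonpos_of_nonpos_of_nonneg (by nlinarith [hv.2]) hr.le),
          mul_div_cancel_left₀ _ hr.ne', add_zero]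
      rw [this]; congr 3; ring
    · apply intervalIntegral.integral_congr
      intro v hv
      rw [uIcc_of_le (by linarith)] at hv
      simp only [hf]
      have : prim Φ v = r / 2 * (prim Φ 1 + (v / r - 1)) := by
        rw [h.prim_eqn hc, h.prim_neg (u := (v - 1 + r) / r) (div_nonpos_of_nonpos_of_nonneg (by linarith [hv.2]) hr.le),
          h.prim_one hc (u := v / r) (by rw [le_div_iff₀ hr]; linarith [hv.1])]
        ring
      rw [this]; congr 3; simp only [hcdef]; field_simp; ring
  · have : ∫ u in (1-r)..1, f u = ∫ u in (r * 0 + (1-r))..(r * 1 + (1-r)), f u := by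
      congr 1 <;> ring
    rw [this, ← intervalIntegral.smul_integral_comp_mul_add, oscF, mul_assoc, Complex.real_smul]
    congr 1
    rw [← intervalIntegral.integral_const_mul]
    apply intervalIntegral.integral_congr
    intro v hv
    rw [uIcc_of_le zero_le_one] at hv
    simp only [hf]
    rw [← Complex.exp_add, ← mul_add, ← Complex.ofReal_add]
    have : prim Φ (r * v + (1-r)) = r / 2 * (prim Φ 1 + ((r * v + (1-r)) / r - 1) + prim Φ v) := by
      rw [h.prim_eqn hc, h.prim_one hc (u := (r * v + (1-r)) / r)
        (by rw [le_div_iff₀ hr]; nlinarith [hv.1])]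
      congr 4; field_simp; ring
    rw [this]; congr 3; simp only [hd, hcdef]; field_simp; ring

lemma oscF_le_one (Φ : ℝ → ℝ) (x ω : ℝ) : ‖oscF Φ x ω‖ ≤ 1 := by
  have := intervalIntegral.norm_integral_le_of_norm_le_const (a := (0:ℝ)) (b := 1) (C := 1)
    (f := fun u => Complex.exp (Complex.I * ((x * prim Φ u - ω * u : ℝ) : ℂ)))
    (fun u _ => (norm_exp_I _).le)
  simpa [oscF] using this

lemma phase_deriv (hc : Continuous Φ) (x ω u : ℝ) :
    HasDerivAt (fun u => x * prim Φ u - ω * u) (x * Φ u - ω) u := by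
  simpa using ((prim_hasDeriv hc u).const_mul x).fun_sub ((hasDerivAt_id u).const_mul ω)

lemma oscF_left (h : IsCantor r α Φ) (hc : Continuous Φ) {x ω : ℝ} (hx : 0 ≤ x) (hω : ω < 0) :
    ‖oscF Φ x ω‖ ≤ 3 / (-ω) := by
  refine vdc_pos (A := x - ω) (phase_deriv hc x ω) (by fun_prop) (Or.inl ?_) (by linarith)
    ?_ ?_ zero_le_one
  · intro u v huv; have := h.mono huv; simp only; nlinarith
  · intro u; nlinarith [h.nonneg u]
  · intro u; nlinarith [h.le_one u]

lemma oscF_right (h : IsCantor r α Φ) (hc : Continuous Φ) {x ω : ℝ} (hx : 0 ≤ x) (hω : x < ω) :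
    ‖oscF Φ x ω‖ ≤ 3 / (ω - x) := by
  refine vdc_neg (A := ω) (phase_deriv hc x ω) (by fun_prop) (Or.inl ?_) (by linarith)
    ?_ ?_ zero_le_one
  · intro u v huv; have := h.mono huv; simp only; nlinarith
  · intro u; nlinarith [h.le_one u]
  · intro u; nlinarith [h.nonneg u]

lemma lin_bound {a b c y : ℝ} (hab : a ≤ b) (hy : y ≠ 0) :
    ‖∫ u in a..b, Complex.exp (Complex.I * ((c + y * u : ℝ) : ℂ))‖ ≤ 3 / |y| := by
  have hd : ∀ u, HasDerivAt (fun u => c + y * u) y u := fun u => by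
    simpa using ((hasDerivAt_id u).const_mul y).const_add c
  rcases lt_or_gt_of_ne hy with k | k
  · rw [abs_of_neg k]
    exact vdc_neg (φ := fun _ => y) (A := -y) hd continuous_const (Or.inl monotone_const) (by linarith)
      (fun _ => by linarith) (fun _ => by linarith) hab
  · rw [abs_of_pos k]
    exact vdc_pos (φ := fun _ => y) (A := y) hd continuous_const (Or.inl monotone_const) (by linarith)
      (fun _ => by linarith) (fun _ => by linarith) hab

lemma oscF_base (h : IsCantor r α Φ) (hc : Continuous Φ) {x ω : ℝ} (hx : 0 ≤ x) (hx1 : x ≤ 1) :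
    ‖oscF Φ x ω‖ ≤ 8 / (1 + |ω|) := by
  have hp : 0 < 1 + |ω| := by positivity
  rw [le_div_iff₀ hp]
  have h1 := oscF_le_one Φ x ω
  have h0 := norm_nonneg (oscF Φ x ω)
  by_cases c1 : ω < 0
  · have := h.oscF_left hc hx c1
    rw [le_div_iff₀ (by linarith)] at this
    rw [abs_of_neg c1]; nlinarith
  · push Not at c1
    rw [abs_of_nonneg c1]
    by_cases c2 : x < ω
    · have := h.oscF_right hc hx c2
      rw [le_div_iff₀ (by linarith)] at this
      nlinarith
    · push Not at c2; nlinarith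

lemma oscF_rec (h : IsCantor r α Φ) (hc : Continuous Φ) {x : ℝ} (ω : ℝ) (hx : 0 ≤ x) :
    ‖oscF Φ x ω‖ ≤ r * ‖oscF Φ (x * r / 2) (r * ω)‖ + 8 / (1 + |ω - x/2|) ∨
    ‖oscF Φ x ω‖ ≤ r * ‖oscF Φ (x * r / 2) (r * (ω - x/2))‖ + 8 / (1 + |ω - x/2|) := by
  have hr := h.r0
  have hr1 := h.r1
  obtain ⟨z₁, z₂, c, n1, n2, e⟩ := h.oscF_split hc x ω
  set M := ∫ u in r..(1 - r), Complex.exp (Complex.I * ((c + (x / 2 - ω) * u : ℝ) : ℂ)) with hM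
  have tri : ‖oscF Φ x ω‖ ≤ r * ‖oscF Φ (x * r / 2) (r * ω)‖ + ‖M‖ +
      r * ‖oscF Φ (x * r / 2) (r * (ω - x/2))‖ := by
    rw [e]
    refine (norm_add_le _ _).trans ?_
    refine (add_le_add_left (norm_add_le _ _) _).trans ?_
    rw [norm_mul, norm_mul, n1, n2]
  have hM1 : ‖M‖ ≤ 1 := by
    have := intervalIntegral.norm_integral_le_of_norm_le_const (a := r) (b := 1 - r) (C := 1)
      (f := fun u => Complex.exp (Complex.I * ((c + (x / 2 - ω) * u : ℝ) : ℂ)))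
      (fun u _ => (norm_exp_I _).le)
    rw [abs_of_nonneg (by linarith)] at this
    linarith
  have hM2 : ‖M‖ * |ω - x/2| ≤ 3 := by
    by_cases hy : x / 2 - ω = 0
    · rw [abs_sub_comm, hy]; simp
    · have := lin_bound (a := r) (b := 1 - r) (c := c) (by linarith) hy
      rw [abs_sub_comm]
      rwa [le_div_iff₀ (abs_pos.2 hy)] at this
  have hp : 0 < 1 + |ω - x/2| := by positivity
  have fin : ∀ w : ℝ, 0 ≤ w → w ≤ 1 → w * (r * |ω - x/2|) ≤ 3 →
      ‖M‖ + r * w ≤ 8 / (1 + |ω - x/2|) := by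
    intro w w0 w1 w3
    rw [le_div_iff₀ hp]
    nlinarith [norm_nonneg M]
  have hx' : 0 ≤ x * r / 2 := by positivity
  rcases le_total ω (x/2) with k | k
  · left
    have := fin ‖oscF Φ (x * r / 2) (r * (ω - x/2))‖ (norm_nonneg _) (oscF_le_one _ _ _) ?_
    · linarith
    · rcases k.eq_or_lt with k | k
      · rw [k]; simp
      · have hn : r * (ω - x/2) < 0 := mul_neg_of_pos_of_neg hr (by linarith)
        have := h.oscF_left hc hx' hn
        rw [le_div_iff₀ (by linarith)] at this
        rw [abs_of_neg (by linarith : ω - x/2 < 0)]; linarith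
  · right
    have := fin ‖oscF Φ (x * r / 2) (r * ω)‖ (norm_nonneg _) (oscF_le_one _ _ _) ?_
    · linarith
    · rcases k.eq_or_lt with k | k
      · rw [k]; simp
      · have hn : x * r / 2 < r * ω := by nlinarith
        have := h.oscF_right hc hx' hn
        rw [le_div_iff₀ (by linarith)] at this
        rw [abs_of_pos (by linarith : 0 < ω - x/2)]; linarith

end IsCantor

lemma tele_ineq {p a τ : ℝ} (hp : 1 < p) (ha : 1 ≤ a) (hτ : 0 < τ) :
    τ * (a + τ) ^ (-p) ≤ (a ^ (1 - p) - (a + τ) ^ (1 - p)) / (p - 1) := by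
  have hb : 0 < a + τ := by linarith
  have ha0 : 0 < a := by linarith
  rw [le_div_iff₀ (by linarith)]
  have h1 : (a + τ) ^ (-p) = (a + τ) ^ (1 - p) * (a + τ)⁻¹ := by
    rw [← Real.rpow_neg_one, ← Real.rpow_add hb]; congr 1; ring
  have h2 : a ^ (1 - p) = (a + τ) ^ (1 - p) * (a / (a + τ)) ^ (1 - p) := by
    rw [← Real.mul_rpow hb.le (by positivity)]; congr 1; field_simp
  have hq : 0 < a / (a + τ) := by positivity
  have h3 : 1 + (p - 1) * (τ / (a + τ)) ≤ (a / (a + τ)) ^ (1 - p) := by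
    rw [Real.rpow_def_of_pos hq]
    have l1 := Real.log_le_sub_one_of_pos hq
    have l2 := Real.add_one_le_exp (Real.log (a / (a + τ)) * (1 - p))
    have l3 : a / (a + τ) - 1 = - (τ / (a + τ)) := by field_simp; ring
    rw [l3] at l1
    nlinarith
  have h4 : 0 < (a + τ) ^ (1 - p) := Real.rpow_pos_of_pos hb _
  rw [h1, h2]
  calc τ * ((a + τ) ^ (1 - p) * (a + τ)⁻¹) * (p - 1)
      = (a + τ) ^ (1 - p) * ((p - 1) * (τ / (a + τ))) := by rw [div_eq_mul_inv]; ring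
    _ ≤ (a + τ) ^ (1 - p) * ((a / (a + τ)) ^ (1 - p) - 1) := by gcongr; linarith
    _ = _ := by ring

lemma nat_sum_bound {p τ : ℝ} (hp : 1 < p) (hτ : 0 < τ) (hτ1 : τ ≤ 1) (N : ℕ) :
    ∑ i ∈ Finset.range N, τ * (1 + i * τ) ^ (-p) ≤ 1 + 1 / (p - 1) := by
  have hp' : 0 < p - 1 := by linarith
  have key : ∀ N : ℕ, ∑ i ∈ Finset.range (N+1), τ * (1 + i * τ) ^ (-p)
      ≤ 1 + (1 - (1 + N * τ) ^ (1 - p)) / (p - 1) := by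
    intro N
    induction N with
    | zero => simp [hτ1]
    | succ N ih =>
      rw [Finset.sum_range_succ]
      have := tele_ineq hp (a := 1 + N * τ) (by have : 0 ≤ N * τ := by positivity
                                                linarith) hτ
      have e : (1:ℝ) + (N + 1 : ℕ) * τ = 1 + N * τ + τ := by push_cast; ring
      rw [e]
      calc _ ≤ 1 + (1 - (1 + N * τ) ^ (1 - p)) / (p - 1) + _ := add_le_add ih this
        _ = _ := by ring
  have h2 : ∀ N : ℕ, 1 + (1 - (1 + N * τ) ^ (1 - p)) / (p - 1) ≤ 1 + 1 / (p - 1) := by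
    intro N
    have : 0 ≤ (1 + N * τ) ^ (1 - p) := by positivity
    gcongr; linarith
  cases N with
  | zero => simp; positivity
  | succ N => exact (key N).trans (h2 N)

lemma int_sum_bound {p τ : ℝ} (hp : 1 < p) (hτ : 0 < τ) (hτ1 : τ ≤ 1) (s : Finset ℤ) :
    ∑ k ∈ s, τ * (1 + |(k:ℝ)| * τ) ^ (-p) ≤ 2 * (1 + 1 / (p - 1)) := by
  have aux : ∀ s : Finset ℤ, Set.InjOn Int.natAbs s →
      ∑ k ∈ s, τ * (1 + |(k:ℝ)| * τ) ^ (-p) ≤ 1 + 1 / (p - 1) := by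
    intro s hs
    have : ∑ k ∈ s, τ * (1 + |(k:ℝ)| * τ) ^ (-p) =
        ∑ i ∈ s.image Int.natAbs, τ * (1 + (i:ℝ) * τ) ^ (-p) := by
      rw [Finset.sum_image hs]
      refine Finset.sum_congr rfl fun k _ => ?_
      rw [Nat.cast_natAbs, Int.cast_abs]
    rw [this]
    obtain ⟨N, hN⟩ := (s.image Int.natAbs).exists_nat_subset_range
    refine le_trans ?_ (nat_sum_bound hp hτ hτ1 N)
    exact Finset.sum_le_sum_of_subset_of_nonneg hN fun i _ _ => by positivity
  rw [← Finset.sum_filter_add_sum_filter_not s (fun k => 0 ≤ k)]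
  have a1 := aux (s.filter (fun k => 0 ≤ k)) (by
    intro a ha b hb hab
    simp at ha hb; omega)
  have a2 := aux (s.filter (fun k => ¬ 0 ≤ k)) (by
    intro a ha b hb hab
    simp at ha hb; omega)
  linarith

lemma shift_sum_bound {p τ : ℝ} (hp : 1 < p) (hτ : 0 < τ) (hτ1 : τ ≤ 1) (μ : ℝ) (s : Finset ℤ) :
    ∑ k ∈ s, τ * (1 + |((k:ℝ) - μ) * τ|) ^ (-p) ≤ 2 ^ p * (2 * (1 + 1 / (p - 1))) := by
  have h1 : ∀ k ∈ s, τ * (1 + |((k:ℝ) - μ) * τ|) ^ (-p) ≤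
      2 ^ p * (τ * (1 + |((k - ⌊μ⌋ : ℤ):ℝ)| * τ) ^ (-p)) := by
    intro k _
    have f1 := Int.floor_le μ
    have f2 := Int.lt_floor_add_one μ
    set j : ℤ := k - ⌊μ⌋ with hj
    have hjr : (j:ℝ) = k - ⌊μ⌋ := by rw [hj]; push_cast; ring
    have b1 : |(j:ℝ)| ≤ |(k:ℝ) - μ| + 1 := by
      rw [hjr, show (k:ℝ) - ⌊μ⌋ = (k - μ) + (μ - ⌊μ⌋) by ring]
      refine (abs_add_le _ _).trans ?_
      rw [abs_of_nonneg (by linarith : 0 ≤ μ - ⌊μ⌋)]; linarith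
    have b2 : 1 + |(j:ℝ)| * τ ≤ 2 * (1 + |((k:ℝ) - μ) * τ|) := by
      rw [abs_mul, abs_of_pos hτ]; nlinarith [abs_nonneg ((k:ℝ) - μ)]
    have b3 : (1 + |((k:ℝ) - μ) * τ|) ^ (-p) ≤ ((1 + |(j:ℝ)| * τ) / 2) ^ (-p) :=
      Real.rpow_le_rpow_of_nonpos (by positivity) (by linarith) (by linarith)
    have b4 : ((1 + |(j:ℝ)| * τ) / 2) ^ (-p) = 2 ^ p * (1 + |(j:ℝ)| * τ) ^ (-p) := by
      rw [Real.div_rpow (by positivity) (by norm_num), Real.rpow_neg (by norm_num : (0:ℝ) ≤ 2),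
        div_inv_eq_mul, mul_comm]
    calc _ ≤ τ * ((1 + |(j:ℝ)| * τ) / 2) ^ (-p) := by gcongr
      _ = _ := by rw [b4]; ring
  refine (Finset.sum_le_sum h1).trans ?_
  rw [← Finset.mul_sum]
  gcongr
  have : ∑ k ∈ s, τ * (1 + |((k - ⌊μ⌋ : ℤ):ℝ)| * τ) ^ (-p) =
      ∑ j ∈ s.image (fun k => k - ⌊μ⌋), τ * (1 + |(j:ℝ)| * τ) ^ (-p) := by
    rw [Finset.sum_image]
    intro a _ b _ hab
    simpa using hab
  rw [this]
  exact int_sum_bound hp hτ hτ1 _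

lemma add_rpow_bound {p κ a b : ℝ} (hp : 1 < p) (hκ : 0 < κ) (ha : 0 ≤ a) (hb : 0 ≤ b) :
    (a + b) ^ p ≤ (1 + κ) ^ p * a ^ p + (1 + 1 / κ) ^ p * b ^ p := by
  have p0 : 0 ≤ p := by linarith
  rw [← Real.mul_rpow (by positivity) ha, ← Real.mul_rpow (by positivity) hb]
  have n1 : 0 ≤ ((1 + κ) * a) ^ p := by positivity
  have n2 : 0 ≤ ((1 + 1 / κ) * b) ^ p := by positivity
  rcases le_total b (κ * a) with h | h
  · have : (a + b) ^ p ≤ ((1 + κ) * a) ^ p := Real.rpow_le_rpow (by positivity) (by linarith) p0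
    linarith
  · have h' : a ≤ 1 / κ * b := by rw [one_div, inv_mul_eq_div, le_div_iff₀ hκ]; linarith
    have : (a + b) ^ p ≤ ((1 + 1 / κ) * b) ^ p :=
      Real.rpow_le_rpow (by positivity) (by linarith) p0
    linarith

lemma oscF_conj (Φ : ℝ → ℝ) (x ω : ℝ) : ‖oscF Φ x ω‖ = ‖oscF Φ (-x) (-ω)‖ := by
  rw [oscF, oscF, ← conj_int]
  congr 2; ext u; congr 3; ring

lemma key_bound {r α p : ℝ} {Φ : ℝ → ℝ} (h : IsCantor r α Φ) (hc : Continuous Φ) (hp : 1 < p)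
    (hrp : 2 * r ^ (p - 1) < 1) :
    ∃ K : ℝ, 0 < K ∧ ∀ (x μ τ : ℝ) (s : Finset ℤ), 0 < τ → τ ≤ 1 →
      ∑ k ∈ s, τ * ‖oscF Φ x (((k:ℝ) - μ) * τ)‖ ^ p ≤ K := by
  have hr := h.r0
  have hr1 := h.r1
  have p0 : 0 ≤ p := by linarith
  obtain ⟨κ, hκ, hκ2⟩ : ∃ κ : ℝ, 0 < κ ∧ 2 * r ^ (p - 1) * (1 + κ) ^ p < 1 := by
    have ct : Filter.Tendsto (fun κ : ℝ => 2 * r ^ (p - 1) * (1 + κ) ^ p) (nhdsWithin 0 (Ioi 0))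
        (nhds (2 * r ^ (p - 1) * (1 + 0) ^ p)) := by
      apply Filter.Tendsto.mono_left _ nhdsWithin_le_nhds
      apply ContinuousAt.tendsto (f := fun κ : ℝ => 2 * r ^ (p - 1) * (1 + κ) ^ p)
      have : ContinuousAt (fun κ : ℝ => (1 + κ) ^ p) 0 :=
        (by fun_prop : ContinuousAt (fun κ : ℝ => 1 + κ) 0).rpow_const (Or.inr p0)
      exact this.const_mul _
    have e := ct.eventually (gt_mem_nhds (by simpa using hrp))
    obtain ⟨κ, k1, k2⟩ := (e.and self_mem_nhdsWithin).exists
    exact ⟨κ, k2, k1⟩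
  set q := 2 * r ^ (p - 1) * (1 + κ) ^ p with hq
  set S := 8 ^ p * (2 ^ p * (2 * (1 + 1 / (p - 1)))) with hS
  have hp1 : 0 < p - 1 := by linarith
  have S0 : 0 < S := by positivity
  set L := (1 + 1 / κ) ^ p with hL
  have L0 : 0 < L := by positivity
  set K := S + L * S / (1 - q) with hK
  have hq1 : 0 < 1 - q := by linarith
  have K0 : 0 < K := by positivity
  -- 8/(1+|..|) sums
  have sb : ∀ (μ τ : ℝ) (s : Finset ℤ), 0 < τ → τ ≤ 1 →
      ∑ k ∈ s, τ * (8 / (1 + |((k:ℝ) - μ) * τ|)) ^ p ≤ S := by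
    intro μ τ s h1 h2
    have := shift_sum_bound hp h1 h2 μ s
    calc _ = 8 ^ p * ∑ k ∈ s, τ * (1 + |((k:ℝ) - μ) * τ|) ^ (-p) := by
          rw [Finset.mul_sum]
          refine Finset.sum_congr rfl fun k _ => ?_
          rw [Real.div_rpow (by norm_num) (by positivity), Real.rpow_neg (by positivity)]
          ring
      _ ≤ S := by rw [hS]; gcongr
  have main : ∀ m : ℕ, ∀ x, 0 ≤ x → x ≤ (2 / r) ^ m → ∀ (μ τ : ℝ) (s : Finset ℤ), 0 < τ → τ ≤ 1 →
      ∑ k ∈ s, τ * ‖oscF Φ x (((k:ℝ) - μ) * τ)‖ ^ p ≤ K := by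
    intro m
    induction m with
    | zero =>
      intro x x0 x1 μ τ s t0 t1
      rw [pow_zero] at x1
      calc _ ≤ ∑ k ∈ s, τ * (8 / (1 + |((k:ℝ) - μ) * τ|)) ^ p := by
            refine Finset.sum_le_sum fun k _ => ?_
            gcongr
            exact h.oscF_base hc x0 x1
        _ ≤ S := sb μ τ s t0 t1
        _ ≤ K := by rw [hK]; have : 0 ≤ L * S / (1 - q) := by positivity
                    linarith
    | succ m ih =>
      intro x x0 x1 μ τ s t0 t1
      have y0 : 0 ≤ x * r / 2 := by positivity
      have y1 : x * r / 2 ≤ (2 / r) ^ m := by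
        rw [pow_succ] at x1
        calc x * r / 2 ≤ (2 / r) ^ m * (2 / r) * r / 2 := by gcongr
          _ = (2 / r) ^ m := by field_simp
      set μ' := μ + x / 2 / τ with hμ'
      have A := ih _ y0 y1 μ (τ * r) s (by positivity) (by nlinarith)
      have B := ih _ y0 y1 μ' (τ * r) s (by positivity) (by nlinarith)
      have C := sb μ' τ s t0 t1
      have rr : (r:ℝ) ^ p = r ^ (p - 1) * r := by
        rw [← Real.rpow_add_one hr.ne']; congr 1; ring
      have pt : ∀ k ∈ s, τ * ‖oscF Φ x (((k:ℝ) - μ) * τ)‖ ^ p ≤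
          (1 + κ) ^ p * r ^ (p - 1) * (τ * r * ‖oscF Φ (x * r / 2) (((k:ℝ) - μ) * (τ * r))‖ ^ p)
          + (1 + κ) ^ p * r ^ (p - 1) * (τ * r * ‖oscF Φ (x * r / 2) (((k:ℝ) - μ') * (τ * r))‖ ^ p)
          + L * (τ * (8 / (1 + |((k:ℝ) - μ') * τ|)) ^ p) := by
        intro k _
        set ω := ((k:ℝ) - μ) * τ with hω
        have e1 : ((k:ℝ) - μ) * (τ * r) = r * ω := by rw [hω]; ring
        have e2 : ((k:ℝ) - μ') * τ = ω - x / 2 := by rw [hω, hμ']; field_simp; ring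
        have e3 : ((k:ℝ) - μ') * (τ * r) = r * (ω - x / 2) := by rw [← e2]; ring
        rw [e1, e3, e2]
        set U := ‖oscF Φ (x * r / 2) (r * ω)‖
        set V := ‖oscF Φ (x * r / 2) (r * (ω - x / 2))‖
        set W := 8 / (1 + |ω - x / 2|)
        have U0 : 0 ≤ U := norm_nonneg _
        have V0 : 0 ≤ V := norm_nonneg _
        have W0 : 0 ≤ W := by positivity
        have gen : ∀ Z, 0 ≤ Z → ‖oscF Φ x ω‖ ≤ r * Z + W →
            τ * ‖oscF Φ x ω‖ ^ p ≤ (1 + κ) ^ p * r ^ (p - 1) * (τ * r * Z ^ p) + L * (τ * W ^ p) := by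
          intro Z Z0 hZ
          calc τ * ‖oscF Φ x ω‖ ^ p ≤ τ * (r * Z + W) ^ p := by gcongr
            _ ≤ τ * ((1 + κ) ^ p * (r * Z) ^ p + L * W ^ p) := by
                gcongr; exact add_rpow_bound hp hκ (by positivity) W0
            _ = _ := by rw [Real.mul_rpow hr.le Z0, rr]; ring
        have nU : 0 ≤ (1 + κ) ^ p * r ^ (p - 1) * (τ * r * U ^ p) := by positivity
        have nV : 0 ≤ (1 + κ) ^ p * r ^ (p - 1) * (τ * r * V ^ p) := by positivity
        rcases h.oscF_rec hc ω x0 with k | k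
        · have := gen U U0 k; linarith
        · have := gen V V0 k; linarith
      refine (Finset.sum_le_sum pt).trans ?_
      rw [Finset.sum_add_distrib, Finset.sum_add_distrib]
      have c0 : 0 ≤ (1 + κ) ^ p * r ^ (p - 1) := by positivity
      have D1 := mul_le_mul_of_nonneg_left A c0
      have D2 := mul_le_mul_of_nonneg_left B c0
      have D3 := mul_le_mul_of_nonneg_left C L0.le
      rw [Finset.mul_sum] at D1 D2 D3
      have D4 : q * K + L * S ≤ K := by
        have : L * S ≤ (1 - q) * K := by
          rw [hK, mul_add, mul_div_cancel₀ _ hq1.ne']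
          have : 0 ≤ (1 - q) * S := by positivity
          linarith
        linarith
      have D5 : (1 + κ) ^ p * r ^ (p - 1) * K + (1 + κ) ^ p * r ^ (p - 1) * K = q * K := by
        rw [hq]; ring
      linarith
  have big : ∀ x : ℝ, ∃ m : ℕ, x ≤ (2 / r) ^ m := fun x => by
    obtain ⟨m, hm⟩ := pow_unbounded_of_one_lt x (by rw [lt_div_iff₀ hr]; linarith : 1 < 2 / r)
    exact ⟨m, hm.le⟩
  refine ⟨K, K0, fun x μ τ s t0 t1 => ?_⟩
  rcases le_total 0 x with hx | hx
  · obtain ⟨m, hm⟩ := big x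
    exact main m x hx hm μ τ s t0 t1
  · obtain ⟨m, hm⟩ := big (-x)
    have := main m (-x) (by linarith) hm (-μ) τ (s.image (fun k => -k)) t0 t1
    rw [Finset.sum_image (by intro a _ b _ hab; simpa using hab)] at this
    convert this using 4 with k
    rw [oscF_conj]; congr 2; push_cast; ring

noncomputable def lpn (p : ℝ) (s : Finset ℤ) (v : ℤ → ℂ) : ℝ := (∑ k ∈ s, ‖v k‖ ^ p) ^ (1 / p)

lemma lpn_mono {p : ℝ} (hp : 1 < p) {s : Finset ℤ} {v w : ℤ → ℂ} (h : ∀ k, ‖v k‖ ≤ ‖w k‖) :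
    lpn p s v ≤ lpn p s w := by
  have p0 : 0 ≤ p := by linarith
  unfold lpn
  gcongr with k
  exact h k

lemma lpn_add {p : ℝ} (hp : 1 < p) (s : Finset ℤ) (v w : ℤ → ℂ) :
    lpn p s (fun k => v k + w k) ≤ lpn p s v + lpn p s w := by
  have p0 : 0 ≤ p := by linarith
  refine le_trans ?_ (Real.Lp_add_le_of_nonneg s hp.le (f := fun k => ‖v k‖) (g := fun k => ‖w k‖)
    (fun _ _ => norm_nonneg _) (fun _ _ => norm_nonneg _))
  unfold lpn
  gcongr with k
  exact norm_add_le _ _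

lemma lpn_sub {p : ℝ} (hp : 1 < p) (s : Finset ℤ) (v w : ℤ → ℂ) :
    lpn p s (fun k => v k - w k) ≤ lpn p s v + lpn p s w := by
  have := lpn_add hp s v (fun k => - w k)
  simp only [← sub_eq_add_neg] at this
  refine this.trans ?_
  gcongr
  exact lpn_mono hp (fun k => by simp)

lemma piece_norm {Φ : ℝ → ℝ} {A B x c τ : ℝ} (hτ : 0 < τ) (k : ℝ) {θ : ℝ → ℝ}
    (hθ : ∀ t ∈ Icc c (c + τ), θ t = A + B * t + x * prim Φ ((t - c) / τ)) :
    ‖∫ t in c..(c + τ), Complex.exp (Complex.I * ((θ t - k * t : ℝ) : ℂ))‖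
      = τ * ‖oscF Φ x ((k - B) * τ)‖ := by
  have e : ∫ t in c..(c + τ), Complex.exp (Complex.I * ((θ t - k * t : ℝ) : ℂ))
    = ∫ t in (τ * 0 + c)..(τ * 1 + c), Complex.exp (Complex.I * ((θ t - k * t : ℝ) : ℂ)) := by
    congr 1 <;> ring
  rw [e, ← intervalIntegral.smul_integral_comp_mul_add, norm_smul, Real.norm_eq_abs, abs_of_pos hτ]
  congr 1
  have : ∫ u in (0:ℝ)..1, Complex.exp (Complex.I * ((θ (τ * u + c) - k * (τ * u + c) : ℝ) : ℂ))
      = Complex.exp (Complex.I * ((A + (B - k) * c : ℝ) : ℂ)) * oscF Φ x ((k - B) * τ) := by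
    rw [oscF, ← intervalIntegral.integral_const_mul]
    apply intervalIntegral.integral_congr
    intro u hu
    rw [uIcc_of_le zero_le_one] at hu
    simp only
    rw [← Complex.exp_add, ← mul_add, ← Complex.ofReal_add,
      hθ _ ⟨by nlinarith [hu.1], by nlinarith [hu.2]⟩]
    have : (τ * u + c - c) / τ = u := by field_simp; ring
    rw [this]
    congr 3; ring
  rw [this, norm_mul, norm_exp_I, one_mul]

lemma piece_lpn {Φ : ℝ → ℝ} {p K A B x c τ : ℝ} (hp : 1 < p) (hτ : 0 < τ) (hτ1 : τ ≤ 1)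
    (hK : ∀ (x μ τ : ℝ) (s : Finset ℤ), 0 < τ → τ ≤ 1 →
      ∑ k ∈ s, τ * ‖oscF Φ x (((k:ℝ) - μ) * τ)‖ ^ p ≤ K)
    (s : Finset ℤ) {θ : ℝ → ℝ}
    (hθ : ∀ t ∈ Icc c (c + τ), θ t = A + B * t + x * prim Φ ((t - c) / τ)) :
    lpn p s (fun k => ∫ t in c..(c + τ), Complex.exp (Complex.I * ((θ t - k * t : ℝ) : ℂ)))
      ≤ (K * τ ^ (p - 1)) ^ (1 / p) := by
  have p0 : 0 < p := by linarith
  unfold lpn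
  apply Real.rpow_le_rpow (by positivity) _ (by positivity)
  have := hK x B τ s hτ hτ1
  calc _ = ∑ k ∈ s, τ ^ (p - 1) * (τ * ‖oscF Φ x (((k:ℝ) - B) * τ)‖ ^ p) := by
        refine Finset.sum_congr rfl fun k _ => ?_
        rw [piece_norm hτ k hθ, Real.mul_rpow hτ.le (norm_nonneg _), ← mul_assoc,
          ← Real.rpow_add_one hτ.ne']
        congr 2; ring
    _ = τ ^ (p - 1) * ∑ k ∈ s, τ * ‖oscF Φ x (((k:ℝ) - B) * τ)‖ ^ p := by rw [Finset.mul_sum]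
    _ ≤ τ ^ (p - 1) * K := by gcongr
    _ = _ := mul_comm _ _

/-- the exponential attached to a density -/
noncomputable def eD (D : ℝ → ℝ) (n : ℤ) (t : ℝ) : ℂ :=
  Complex.exp (Complex.I * (n : ℂ) * ((t + prim D t : ℝ) : ℂ))

lemma eD_mul (D : ℝ → ℝ) (n k : ℤ) (t : ℝ) :
    eD D n t * Complex.exp (-Complex.I * (k : ℂ) * (t : ℂ)) =
      Complex.exp (Complex.I * (((n:ℝ) * (t + prim D t) - (k:ℝ) * t : ℝ) : ℂ)) := by
  rw [eD, ← Complex.exp_add]; congr 1; push_cast; ring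

lemma DenseFlat.add {f g : ℝ → ℝ} (hf : DenseFlat f) (hg : DenseFlat g) :
    DenseFlat (fun t => f t + g t) := by
  intro a b hab
  obtain ⟨a1, b1, c1, h1, h2, h3, h4⟩ := hf a b hab
  obtain ⟨a2, b2, c2, k1, k2, k3, k4⟩ := hg a1 b1 h2
  exact ⟨a2, b2, c1 + c2, h1.trans k1, k2, k3.trans h3, fun t ht => by
    show f t + g t = c1 + c2
    rw [h4 t ⟨k1.trans ht.1, ht.2.trans k3⟩, k4 t ht]⟩

lemma DenseFlat.const_mul {f : ℝ → ℝ} (hf : DenseFlat f) (c : ℝ) :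
    DenseFlat (fun t => c * f t) := by
  intro a b hab
  obtain ⟨a1, b1, c1, h1, h2, h3, h4⟩ := hf a b hab
  exact ⟨a1, b1, c * c1, h1, h2, h3, fun t ht => by
    show c * f t = c * c1
    rw [h4 t ht]⟩

lemma DenseFlat.affine {f : ℝ → ℝ} (hf : DenseFlat f) (c : ℝ) {τ : ℝ} (hτ : 0 < τ) :
    DenseFlat (fun t => f ((t - c) / τ)) := by
  intro a b hab
  obtain ⟨a1, b1, c1, h1, h2, h3, h4⟩ := hf ((a - c) / τ) ((b - c) / τ) (by gcongr)
  rw [div_le_iff₀ hτ] at h1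
  rw [le_div_iff₀ hτ] at h3
  refine ⟨a1 * τ + c, b1 * τ + c, c1, by linarith, by gcongr, by linarith, fun t ht => ?_⟩
  apply h4
  exact ⟨by rw [le_div_iff₀ hτ]; linarith [ht.1], by rw [div_le_iff₀ hτ]; linarith [ht.2]⟩

lemma avoid_finset (S : Finset ℝ) (a b : ℝ) (hab : a < b) :
    ∃ a' b', a ≤ a' ∧ a' < b' ∧ b' ≤ b ∧ ∀ x ∈ S, x ∉ Ioo a' b' := by
  classical
  induction S using Finset.induction_on with
  | empty => exact ⟨a, b, le_rfl, hab, le_rfl, by simp⟩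
  | insert y S _ ih =>
    obtain ⟨a', b', h1, h2, h3, h4⟩ := ih
    by_cases hy : y ∈ Ioo a' b'
    · refine ⟨a', y, h1, hy.1, hy.2.le.trans h3, fun x hx => ?_⟩
      rcases Finset.mem_insert.1 hx with rfl | hx
      · simp
      · exact fun hh => h4 x hx ⟨hh.1, hh.2.trans hy.2⟩
    · refine ⟨a', b', h1, h2, h3, fun x hx => ?_⟩
      rcases Finset.mem_insert.1 hx with rfl | hx
      · exact hy
      · exact h4 x hx

/-- the bump -/
noncomputable def bump (Φ : ℝ → ℝ) (u : ℝ) : ℝ := Φ u - 2 * Φ (u - 1) + Φ (u - 2)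

namespace IsCantor
variable {r α : ℝ} {Φ : ℝ → ℝ}

lemma bump_cont (hc : Continuous Φ) : Continuous (bump Φ) := by unfold bump; fun_prop

lemma bump_neg (h : IsCantor r α Φ) {u : ℝ} (hu : u ≤ 0) : bump Φ u = 0 := by
  rw [bump, h.zero _ hu, h.zero _ (by linarith), h.zero _ (by linarith)]; ring

lemma bump_ge (h : IsCantor r α Φ) {u : ℝ} (hu : 3 ≤ u) : bump Φ u = 0 := by
  rw [bump, h.one u (by linarith), h.one (u - 1) (by linarith), h.one (u - 2) (by linarith)]; ring

lemma bump_one (h : IsCantor r α Φ) : bump Φ 1 = 1 := by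
  rw [bump, h.one 1 le_rfl, h.zero _ (by norm_num), h.zero _ (by norm_num)]; ring

lemma bump_abs (h : IsCantor r α Φ) (u : ℝ) : |bump Φ u| ≤ 2 := by
  have := h.nonneg u
  have := h.nonneg (u-1)
  have := h.nonneg (u-2)
  have := h.le_one u
  have := h.le_one (u-1)
  have := h.le_one (u-2)
  rw [bump, abs_le]; constructor <;> linarith

lemma bump_holder {C : ℝ} (hC : ∀ s t, |Φ s - Φ t| ≤ C * |s - t| ^ α) (s t : ℝ) :
    |bump Φ s - bump Φ t| ≤ 4 * C * |s - t| ^ α := by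
  have a := hC s t
  have b := hC (s-1) (t-1)
  have c := hC (s-2) (t-2)
  rw [show s - 1 - (t - 1) = s - t by ring] at b
  rw [show s - 2 - (t - 2) = s - t by ring] at c
  rw [abs_le] at *
  rw [bump, bump]
  constructor <;> linarith

lemma bump_flat (h : IsCantor r α Φ) : DenseFlat (bump Φ) := by
  have h0 := h.denseFlat
  have h1 := (h0.affine 1 one_pos).const_mul (-2)
  have h2 := h0.affine 2 one_pos
  have := (h0.add h1).add h2
  convert this using 2 with t
  rw [bump]; simp only [div_one]; ring

lemma prim_bump (h : IsCantor r α Φ) (hc : Continuous Φ) (u : ℝ) :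
    prim (bump Φ) u = prim Φ u - 2 * prim Φ (u - 1) + prim Φ (u - 2) := by
  have := eq_of_deriv (f := prim (bump Φ)) (φ := bump Φ)
    (g := fun u => prim Φ u - 2 * prim Φ (u - 1) + prim Φ (u - 2))
    (prim_hasDeriv (bump_cont hc)) ?_ ?_
  · exact congrFun this u
  · intro u
    have a := prim_hasDeriv hc u
    have b := (prim_hasDeriv hc (u - 1)).comp u ((hasDerivAt_id u).sub_const 1)
    have c := (prim_hasDeriv hc (u - 2)).comp u ((hasDerivAt_id u).sub_const 2)
    refine ((a.fun_sub (b.const_mul 2)).fun_add c).congr_deriv ?_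
    rw [bump]; ring
  · simp only [prim_zero]
    rw [h.prim_neg (by norm_num), h.prim_neg (by norm_num)]; ring

lemma prim_bump_neg (h : IsCantor r α Φ) (hc : Continuous Φ) {u : ℝ} (hu : u ≤ 0) :
    prim (bump Φ) u = 0 := by
  rw [h.prim_bump hc, h.prim_neg hu, h.prim_neg (by linarith), h.prim_neg (by linarith)]; ring

lemma prim_bump_ge (h : IsCantor r α Φ) (hc : Continuous Φ) {u : ℝ} (hu : 3 ≤ u) :
    prim (bump Φ) u = 0 := by
  rw [h.prim_bump hc, h.prim_one hc (u := u) (by linarith), h.prim_one hc (u := u-1) (by linarith),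
    h.prim_one hc (u := u-2) (by linarith)]; ring

lemma prim_bump_piece (h : IsCantor r α Φ) (hc : Continuous Φ) :
    (∀ u ≤ 1, prim (bump Φ) u = 0 + 0 * u + 1 * prim Φ (u - 0)) ∧
    (∀ u, 1 ≤ u → u ≤ 2 → prim (bump Φ) u = (prim Φ 1 - 1) + 1 * u + (-2) * prim Φ (u - 1)) ∧
    (∀ u, 2 ≤ u → prim (bump Φ) u = (3 - prim Φ 1) + (-1) * u + 1 * prim Φ (u - 2)) := by
  refine ⟨fun u hu => ?_, fun u hu hu2 => ?_, fun u hu => ?_⟩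
  · rw [h.prim_bump hc, h.prim_neg (u := u - 1) (by linarith),
      h.prim_neg (u := u - 2) (by linarith), sub_zero]; ring
  · rw [h.prim_bump hc, h.prim_one hc (u := u) hu, h.prim_neg (u := u - 2) (by linarith)]; ring
  · rw [h.prim_bump hc, h.prim_one hc (u := u) (by linarith),
      h.prim_one hc (u := u - 1) (by linarith)]; ring

end IsCantor

structure Good (D : ℝ → ℝ) : Prop where
  cont : Continuous D
  flat : DenseFlat D
  neg : ∀ t ≤ 0, D t = 0
  ge : ∀ t, 2 * Real.pi ≤ t → D t = 0
  int : prim D (2 * Real.pi) = 0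

lemma prim_affine {D : ℝ → ℝ} (hc : Continuous D) {a b d : ℝ} (hd : ∀ t ∈ Icc a b, D t = d)
    {t : ℝ} (ht : t ∈ Icc a b) : prim D t = (prim D a - d * a) + d * t := by
  have e : prim D t = prim D a + ∫ v in a..t, D v := by
    rw [prim, prim, intervalIntegral.integral_add_adjacent_intervals (hc.intervalIntegrable _ _)
      (hc.intervalIntegrable _ _)]
  rw [e, intervalIntegral.integral_congr (g := fun _ => d)]
  · simp; ring
  · intro v hv
    rw [uIcc_of_le ht.1] at hv
    exact hd v ⟨hv.1, hv.2.trans ht.2⟩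

lemma three_lpn {Φ : ℝ → ℝ} {p K c τ : ℝ} (hp : 1 < p) (hτ : 0 < τ) (hτ1 : τ ≤ 1)
    (hK : ∀ (x μ τ : ℝ) (s : Finset ℤ), 0 < τ → τ ≤ 1 →
      ∑ k ∈ s, τ * ‖oscF Φ x (((k:ℝ) - μ) * τ)‖ ^ p ≤ K)
    (s : Finset ℤ) {θ : ℝ → ℝ} (hc : Continuous θ)
    (h0 : ∃ A B x, ∀ t ∈ Icc c (c + τ), θ t = A + B * t + x * prim Φ ((t - c) / τ))
    (h1 : ∃ A B x, ∀ t ∈ Icc (c + τ) (c + τ + τ),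
      θ t = A + B * t + x * prim Φ ((t - (c + τ)) / τ))
    (h2 : ∃ A B x, ∀ t ∈ Icc (c + τ + τ) (c + τ + τ + τ),
      θ t = A + B * t + x * prim Φ ((t - (c + τ + τ)) / τ)) :
    lpn p s (fun k => ∫ t in c..(c + τ + τ + τ),
        Complex.exp (Complex.I * ((θ t - k * t : ℝ) : ℂ)))
      ≤ 3 * (K * τ ^ (p - 1)) ^ (1 / p) := by
  obtain ⟨A0, B0, x0, h0⟩ := h0
  obtain ⟨A1, B1, x1, h1⟩ := h1
  obtain ⟨A2, B2, x2, h2⟩ := h2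
  have b0 := piece_lpn hp hτ hτ1 hK s h0
  have b1 := piece_lpn hp hτ hτ1 hK s h1
  have b2 := piece_lpn hp hτ hτ1 hK s h2
  have ci : ∀ (k : ℤ) (a b : ℝ), IntervalIntegrable
      (fun t => Complex.exp (Complex.I * ((θ t - k * t : ℝ) : ℂ))) volume a b := by
    intro k a b
    apply Continuous.intervalIntegrable
    fun_prop
  have e : (fun k : ℤ => ∫ t in c..(c + τ + τ + τ),
        Complex.exp (Complex.I * ((θ t - k * t : ℝ) : ℂ))) = fun k : ℤ =>
        ((∫ t in c..(c + τ), Complex.exp (Complex.I * ((θ t - k * t : ℝ) : ℂ))) +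
        ∫ t in (c + τ)..(c + τ + τ), Complex.exp (Complex.I * ((θ t - k * t : ℝ) : ℂ))) +
        ∫ t in (c + τ + τ)..(c + τ + τ + τ), Complex.exp (Complex.I * ((θ t - k * t : ℝ) : ℂ)) := by
    funext k
    rw [intervalIntegral.integral_add_adjacent_intervals (ci k _ _) (ci k _ _),
      intervalIntegral.integral_add_adjacent_intervals (ci k _ _) (ci k _ _)]
  rw [e]
  refine (lpn_add hp s _ _).trans ?_
  have := lpn_add hp s (fun k : ℤ => ∫ t in c..(c + τ), Complex.exp (Complex.I * ((θ t - k * t : ℝ) : ℂ))) (fun k : ℤ => ∫ t in (c + τ)..(c + τ + τ), Complex.exp (Complex.I * ((θ t - k * t : ℝ) : ℂ)))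
  linarith

/-- two continuous functions agreeing off a middle interval -/
lemma int_diff {f g : ℝ → ℂ} (hf : Continuous f) (hg : Continuous g) {a b c d : ℝ}
    (hab : a ≤ b) (hcd : c ≤ d) (h1 : ∀ t, t ≤ b → f t = g t) (h2 : ∀ t, c ≤ t → f t = g t) :
    (∫ t in a..d, f t) = (∫ t in a..d, g t) + ((∫ t in b..c, f t) - ∫ t in b..c, g t) := by
  have i1 : ∀ f : ℝ → ℂ, Continuous f → (∫ t in a..d, f t) =
      (∫ t in a..b, f t) + (∫ t in b..c, f t) + ∫ t in c..d, f t := by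
    intro f hf
    rw [intervalIntegral.integral_add_adjacent_intervals (hf.intervalIntegrable _ _)
      (hf.intervalIntegrable _ _), intervalIntegral.integral_add_adjacent_intervals
      (hf.intervalIntegrable _ _) (hf.intervalIntegrable _ _)]
  rw [i1 f hf, i1 g hg, intervalIntegral.integral_congr (a := a) (b := b) (g := g),
    intervalIntegral.integral_congr (a := c) (b := d) (f := f) (g := g)]
  · ring
  · intro t ht; rw [uIcc_of_le hcd] at ht; exact h2 t ht.1
  · intro t ht; rw [uIcc_of_le hab] at ht; exact h1 t ht.2

lemma eD_cont {D : ℝ → ℝ} (hc : Continuous D) (n : ℤ) : Continuous (eD D n) := by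
  unfold eD
  have := prim_cont hc
  fun_prop

lemma exists_tau {K p η L : ℝ} (hK : 0 < K) (hp : 1 < p) (hη : 0 < η) (hL : 0 < L) :
    ∃ τ, 0 < τ ∧ τ ≤ 1 ∧ τ + τ + τ ≤ L ∧ 6 * (K * τ ^ (p - 1)) ^ (1 / p) ≤ η := by
  have h1 : ContinuousAt (fun τ : ℝ => 6 * (K * τ ^ (p - 1)) ^ (1 / p)) 0 := by
    apply ContinuousAt.mul continuousAt_const
    apply ContinuousAt.rpow_const _ (Or.inr (by positivity))
    apply ContinuousAt.mul continuousAt_const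
    exact Real.continuousAt_rpow_const _ _ (Or.inr (by linarith))
  have h2 : (6 * (K * (0:ℝ) ^ (p - 1)) ^ (1 / p)) = 0 := by
    rw [Real.zero_rpow (by linarith), mul_zero, Real.zero_rpow (by positivity), mul_zero]
  have h3 := h1.tendsto
  rw [h2] at h3
  have h4 := (h3.eventually (gt_mem_nhds hη)).filter_mono (nhdsWithin_le_nhds (s := Ioi 0))
  have h5 : ∀ᶠ τ : ℝ in nhdsWithin 0 (Ioi 0), τ ∈ Ioo 0 (min 1 (L / 3)) :=
    Ioo_mem_nhdsGT (by positivity)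
  obtain ⟨τ, a, b⟩ := (h4.and h5).exists
  have b2 := b.2
  rw [lt_min_iff] at b2
  exact ⟨τ, b.1, b2.1.le, by linarith [b2.2], a.le⟩

lemma step {r α p : ℝ} {Φ : ℝ → ℝ} (h : IsCantor r α Φ) (hα : 0 < α) (hp : 1 < p)
    (hrp : 2 * r ^ (p - 1) < 1) {D : ℝ → ℝ} (hD : Good D) (S : Finset ℝ) {u v η : ℝ}
    (hu : 0 ≤ u) (huv : u < v) (hv : v ≤ 2 * Real.pi) (hη : 0 < η) :
    ∃ (D' : ℝ → ℝ) (S' : Finset ℝ), Good D' ∧ S ⊆ S' ∧ (∀ x ∈ S, D' x = D x) ∧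
      (∃ x ∈ S', ∃ y ∈ S', x ∈ Icc u v ∧ y ∈ Icc u v ∧ D' x ≠ D' y) ∧
      (∀ t, |D' t - D t| ≤ η) ∧
      (∀ s t, |(D' s - D s) - (D' t - D t)| ≤ η * |s - t| ^ α) ∧
      (∀ (n : ℤ) (s : Finset ℤ), lpn p s (fourierCoef (eD D' n)) ≤
        lpn p s (fourierCoef (eD D n)) + η) := by
  classical
  obtain ⟨C, hC0, hC⟩ := h.holder
  have hc := continuous_of_holder hα hC
  obtain ⟨K, hK0, hK⟩ := key_bound h hc hp hrp
  obtain ⟨a1, b1, d, q1, q2, q3, q4⟩ := hD.flat u v huv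
  obtain ⟨c, b, w1, w2, w3, w4⟩ := avoid_finset S a1 b1 q2
  obtain ⟨τ, t0, t1, tL, tη⟩ := exists_tau hK0 hp hη (sub_pos.2 w2)
  have hflat : ∀ t ∈ Icc c (c + τ + τ + τ), D t = d := fun t ht =>
    q4 t ⟨w1.trans ht.1, by linarith [ht.2]⟩
  set a : ℝ := min (η / 2) (η * τ ^ α / (4 * C)) with ha
  have ta : 0 < τ ^ α := Real.rpow_pos_of_pos t0 _
  have a0 : 0 < a := by positivity
  have a1' : a ≤ η / 2 := min_le_left _ _
  have a2' : a * (4 * C) ≤ η * τ ^ α := by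
    rw [← le_div_iff₀ (by positivity)]; exact min_le_right _ _
  set D' : ℝ → ℝ := fun t => D t + a * bump Φ ((t - c) / τ) with hD'
  have bc := IsCantor.bump_cont hc
  have hD'c : Continuous D' := by have := hD.cont; fun_prop
  have bump0 : ∀ t, t ≤ c → bump Φ ((t - c) / τ) = 0 := fun t ht =>
    h.bump_neg (div_nonpos_of_nonpos_of_nonneg (by linarith) t0.le)
  have bump3 : ∀ t, c + τ + τ + τ ≤ t → bump Φ ((t - c) / τ) = 0 := fun t ht =>
    h.bump_ge (by rw [le_div_iff₀ t0]; linarith)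
  have pD : ∀ t, prim D' t = prim D t + a * τ * prim (bump Φ) ((t - c) / τ) := by
    intro t
    refine congrFun (eq_of_deriv (φ := D')
      (g := fun t => prim D t + a * τ * prim (bump Φ) ((t - c) / τ)) (prim_hasDeriv hD'c) ?_ ?_) t
    · intro t
      have e1 := prim_hasDeriv hD.cont t
      have e2 := (prim_hasDeriv bc ((t - c) / τ)).comp t
        (((hasDerivAt_id t).sub_const c).div_const τ)
      refine (e1.fun_add (e2.const_mul (a * τ))).congr_deriv ?_
      simp only [hD']; field_simp
    · simp only [prim_zero]
      rw [h.prim_bump_neg hc (div_nonpos_of_nonpos_of_nonneg (by linarith) t0.le)]; ring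
  have pp0 : ∀ t, t ≤ c → prim D' t = prim D t := fun t ht => by
    rw [pD, h.prim_bump_neg hc (div_nonpos_of_nonpos_of_nonneg (by linarith) t0.le)]; ring
  have pp3 : ∀ t, c + τ + τ + τ ≤ t → prim D' t = prim D t := fun t ht => by
    rw [pD, h.prim_bump_ge hc (by rw [le_div_iff₀ t0]; linarith)]; ring
  refine ⟨D', S ∪ {c, c + τ}, ⟨hD'c, ?_, ?_, ?_, ?_⟩, Finset.subset_union_left, ?_, ?_, ?_, ?_, ?_⟩
  · exact hD.flat.add ((h.bump_flat.affine c t0).const_mul a)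
  · intro t ht; simp only [hD']; rw [hD.neg t ht, bump0 t (by linarith)]; ring
  · intro t ht; simp only [hD']; rw [hD.ge t ht, bump3 t (by linarith)]; ring
  · rw [pp3 _ (by linarith), hD.int]
  · intro x hx
    have := w4 x hx
    simp only [hD']
    by_cases hxc : x ≤ c
    · rw [bump0 x hxc]; ring
    · have : b ≤ x := by by_contra hb; exact this ⟨not_le.1 hxc, not_le.1 hb⟩
      rw [bump3 x (by linarith)]; ring
  · refine ⟨c, by simp, c + τ, by simp, ⟨by linarith, by linarith⟩, ⟨by linarith, by linarith⟩, ?_⟩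
    simp only [hD']
    rw [bump0 c le_rfl, hflat c ⟨le_rfl, by linarith⟩,
      hflat (c + τ) ⟨by linarith, by linarith⟩, add_sub_cancel_left, div_self t0.ne', h.bump_one]
    intro hh; linarith
  · intro t
    simp only [hD', add_sub_cancel_left]
    rw [abs_mul, abs_of_pos a0]
    have := h.bump_abs ((t - c) / τ)
    nlinarith
  · intro s t
    simp only [hD', add_sub_cancel_left]
    rw [← mul_sub, abs_mul, abs_of_pos a0]
    have := IsCantor.bump_holder hC ((s - c) / τ) ((t - c) / τ)
    rw [← sub_div, sub_sub_sub_cancel_right, abs_div, abs_of_pos t0,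
      Real.div_rpow (abs_nonneg _) t0.le] at this
    calc _ ≤ a * (4 * C * (|s - t| ^ α / τ ^ α)) := by gcongr
      _ = a * (4 * C) / τ ^ α * |s - t| ^ α := by ring
      _ ≤ η * |s - t| ^ α := by
        gcongr
        rw [div_le_iff₀ ta]; exact a2'
  · intro n s
    have cD := prim_cont hD.cont
    have cD' := prim_cont hD'c
    set θ : ℝ → ℝ := fun t => (n:ℝ) * (t + prim D t) with hθ
    set θ' : ℝ → ℝ := fun t => (n:ℝ) * (t + prim D' t) with hθ'
    have aff : ∀ t ∈ Icc c (c + τ + τ + τ), prim D t = (prim D c - d * c) + d * t :=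
      fun t ht => prim_affine hD.cont hflat ht
    have Q : lpn p s (fun k => ∫ t in c..(c + τ + τ + τ),
        Complex.exp (Complex.I * ((θ t - k * t : ℝ) : ℂ)))
      ≤ 3 * (K * τ ^ (p - 1)) ^ (1 / p) := by
      refine three_lpn hp t0 t1 hK s (by fun_prop) ?_ ?_ ?_ <;>
      · refine ⟨n * (prim D c - d * c), n * (1 + d), 0, fun t ht => ?_⟩
        simp only [hθ]
        rw [aff t ⟨by linarith [ht.1], by linarith [ht.2]⟩]; ring
    have P : lpn p s (fun k => ∫ t in c..(c + τ + τ + τ),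
        Complex.exp (Complex.I * ((θ' t - k * t : ℝ) : ℂ)))
      ≤ 3 * (K * τ ^ (p - 1)) ^ (1 / p) := by
      obtain ⟨p0, p1, p2⟩ := h.prim_bump_piece hc
      refine three_lpn hp t0 t1 hK s (by fun_prop) ?_ ?_ ?_
      · refine ⟨n * (prim D c - d * c), n * (1 + d), n * (a * τ), fun t ht => ?_⟩
        simp only [hθ']
        rw [pD, aff t ⟨by linarith [ht.1], by linarith [ht.2]⟩,
          p0 _ (by rw [div_le_iff₀ t0]; linarith [ht.2]), sub_zero]; ring
      · refine ⟨n * (prim D c - d * c) + n * (a * τ) * (prim Φ 1 - 1 - c / τ),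
          n * (1 + d) + n * a, n * (a * τ) * (-2), fun t ht => ?_⟩
        simp only [hθ']
        have e : (t - (c + τ)) / τ = (t - c) / τ - 1 := by field_simp; ring
        rw [pD, aff t ⟨by linarith [ht.1], by linarith [ht.2]⟩, e,
          p1 _ (by rw [le_div_iff₀ t0]; linarith [ht.1])
            (by rw [div_le_iff₀ t0]; linarith [ht.2])]
        field_simp; ring
      · refine ⟨n * (prim D c - d * c) + n * (a * τ) * (3 - prim Φ 1 + c / τ),
          n * (1 + d) - n * a, n * (a * τ), fun t ht => ?_⟩
        simp only [hθ']
        have e : (t - (c + τ + τ)) / τ = (t - c) / τ - 2 := by field_simp; ring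
        rw [pD, aff t ⟨by linarith [ht.1], by linarith [ht.2]⟩, e,
          p2 _ (by rw [le_div_iff₀ t0]; linarith [ht.1])]
        field_simp; ring
    have key : fourierCoef (eD D' n) = fun k => fourierCoef (eD D n) k +
        (1 / (2 * (Real.pi : ℂ))) * ((∫ t in c..(c + τ + τ + τ),
        Complex.exp (Complex.I * ((θ' t - k * t : ℝ) : ℂ))) - ∫ t in c..(c + τ + τ + τ),
        Complex.exp (Complex.I * ((θ t - k * t : ℝ) : ℂ))) := by
      funext k
      rw [fourierCoef, fourierCoef, ← mul_add]
      congr 1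
      simp only [eD_mul]
      refine int_diff (by fun_prop) (by fun_prop) (by linarith) (by linarith) ?_ ?_
      · intro t ht; rw [pp0 t ht]
      · intro t ht; rw [pp3 t ht]
    rw [key]
    refine (lpn_add hp s _ _).trans ?_
    gcongr
    refine (lpn_mono hp (w := fun k : ℤ => (∫ t in c..(c + τ + τ + τ),
        Complex.exp (Complex.I * ((θ' t - k * t : ℝ) : ℂ))) - ∫ t in c..(c + τ + τ + τ),
        Complex.exp (Complex.I * ((θ t - k * t : ℝ) : ℂ))) ?_).trans ?_
    · intro k
      rw [norm_mul]
      refine mul_le_of_le_one_left (norm_nonneg _) ?_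
      have : (1 / (2 * (Real.pi : ℂ))) = ((1 / (2 * Real.pi) : ℝ) : ℂ) := by push_cast; rfl
      rw [this, Complex.norm_real, Real.norm_of_nonneg (by positivity),
        div_le_one (by positivity)]
      linarith [Real.pi_gt_three]
    · refine (lpn_sub hp s _ _).trans ?_
      linarith

lemma coef_zero (n k : ℤ) : fourierCoef (eD (fun _ => 0) n) k = if k = n then 1 else 0 := by
  have hpi : (Real.pi : ℂ) ≠ 0 := by exact_mod_cast Real.pi_ne_zero
  have e : ∀ t : ℝ, eD (fun _ => 0) n t * Complex.exp (-Complex.I * (k : ℂ) * (t : ℂ))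
      = Complex.exp (Complex.I * ((n:ℂ) - k) * t) := by
    intro t
    rw [eD, ← Complex.exp_add]; congr 1; simp [prim]; ring
  rw [fourierCoef]
  simp only [e]
  split_ifs with hk
  · subst hk
    simp
    field_simp
  · have h0 : Complex.I * ((n:ℂ) - k) ≠ 0 := by
      apply mul_ne_zero Complex.I_ne_zero
      rw [sub_ne_zero]; exact_mod_cast Ne.symm hk
    rw [integral_exp_mul_complex h0]
    have : Complex.exp (Complex.I * ((n:ℂ) - k) * ((2 * Real.pi : ℝ) : ℂ)) = 1 := by
      rw [Complex.exp_eq_one_iff]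
      exact ⟨n - k, by push_cast; ring⟩
    rw [this]; simp

lemma lpn_zero {p : ℝ} (hp : 1 < p) (n : ℤ) (s : Finset ℤ) :
    lpn p s (fourierCoef (eD (fun _ => 0) n)) ≤ 1 := by
  unfold lpn
  apply Real.rpow_le_one (by positivity) _ (by positivity)
  have : ∀ k, ‖fourierCoef (eD (fun _ => 0) n) k‖ ^ p = if k = n then 1 else 0 := by
    intro k; rw [coef_zero]; split_ifs
    · simp
    · simp; rw [Real.zero_rpow (by linarith)]
  simp only [this]
  rw [Finset.sum_ite_eq']
  split_ifs <;> norm_num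

lemma good_zero : Good (fun _ => 0) where
  cont := continuous_const
  flat := fun a b hab => ⟨a, b, 0, le_rfl, hab, le_rfl, fun _ _ => rfl⟩
  neg := fun _ _ => rfl
  ge := fun _ _ => rfl
  int := by simp [prim]

lemma stepAll {r α p : ℝ} {Φ : ℝ → ℝ} (h : IsCantor r α Φ) (hα : 0 < α) (hp : 1 < p)
    (hrp : 2 * r ^ (p - 1) < 1) {D : ℝ → ℝ} (hD : Good D) (S : Finset ℝ) (u v : ℝ) {η : ℝ}
    (hη : 0 < η) :
    ∃ (D' : ℝ → ℝ) (S' : Finset ℝ), Good D' ∧ S ⊆ S' ∧ (∀ x ∈ S, D' x = D x) ∧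
      (0 ≤ u → u < v → v ≤ 2 * Real.pi →
        ∃ x ∈ S', ∃ y ∈ S', x ∈ Icc u v ∧ y ∈ Icc u v ∧ D' x ≠ D' y) ∧
      (∀ t, |D' t - D t| ≤ η) ∧
      (∀ s t, |(D' s - D s) - (D' t - D t)| ≤ η * |s - t| ^ α) ∧
      (∀ (n : ℤ) (s : Finset ℤ), lpn p s (fourierCoef (eD D' n)) ≤
        lpn p s (fourierCoef (eD D n)) + η) := by
  by_cases hh : 0 ≤ u ∧ u < v ∧ v ≤ 2 * Real.pi
  · obtain ⟨D', S', g1, g2, g3, g4, g5⟩ := step h hα hp hrp hD S hh.1 hh.2.1 hh.2.2 hη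
    exact ⟨D', S', g1, g2, g3, fun _ _ _ => g4, g5⟩
  · refine ⟨D, S, hD, subset_rfl, fun _ _ => rfl, fun a b c => absurd ⟨a, b, c⟩ hh, ?_, ?_, ?_⟩
    · intro t; simp [hη.le]
    · intro s t; simp only [sub_self, abs_zero]; positivity
    · intro n s; linarith

/-- the state of the construction -/
def St := {x : (ℝ → ℝ) × Finset ℝ // Good x.1}

lemma exists_seq {r α p : ℝ} {Φ : ℝ → ℝ} (h : IsCantor r α Φ) (hα : 0 < α) (hp : 1 < p)
    (hrp : 2 * r ^ (p - 1) < 1) (q : ℕ → ℝ × ℝ) :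
    ∃ (D : ℕ → ℝ → ℝ) (S : ℕ → Finset ℝ), D 0 = (fun _ => 0) ∧ (∀ j, Good (D j)) ∧
      (∀ j, S j ⊆ S (j+1)) ∧ (∀ j, ∀ x ∈ S j, D (j+1) x = D j x) ∧
      (∀ j, 0 ≤ (q j).1 → (q j).1 < (q j).2 → (q j).2 ≤ 2 * Real.pi →
        ∃ x ∈ S (j+1), ∃ y ∈ S (j+1), x ∈ Icc (q j).1 (q j).2 ∧ y ∈ Icc (q j).1 (q j).2 ∧
          D (j+1) x ≠ D (j+1) y) ∧
      (∀ j t, |D (j+1) t - D j t| ≤ 1/4 * (1/2)^j) ∧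
      (∀ j s t, |(D (j+1) s - D j s) - (D (j+1) t - D j t)| ≤ 1/4 * (1/2)^j * |s - t| ^ α) ∧
      (∀ j (n : ℤ) (s : Finset ℤ), lpn p s (fourierCoef (eD (D (j+1)) n)) ≤
        lpn p s (fourierCoef (eD (D j) n)) + 1/4 * (1/2)^j) := by
  have hs := fun (j : ℕ) (x : St) => stepAll h hα hp hrp x.2 x.1.2 (q j).1 (q j).2
    (η := 1/4 * (1/2)^j) (by positivity)
  choose D' S' g1 g2 g3 g4 g5 g6 g7 using hs
  let F : ℕ → St := fun j => Nat.rec ⟨(fun _ => 0, ∅), good_zero⟩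
    (fun j x => ⟨(D' j x, S' j x), g1 j x⟩) j
  exact ⟨fun j => (F j).1.1, fun j => (F j).1.2, rfl, fun j => (F j).2, fun j => g2 j (F j),
    fun j => g3 j (F j), fun j => g4 j (F j), fun j => g5 j (F j), fun j => g6 j (F j),
    fun j => g7 j (F j)⟩

open Filter in
lemma exists_limit {r α p : ℝ} {Φ : ℝ → ℝ} (h : IsCantor r α Φ) (hα : 0 < α) (hp : 1 < p)
    (hrp : 2 * r ^ (p - 1) < 1) :
    ∃ D : ℝ → ℝ, (∀ t, |D t| ≤ 1/2) ∧ (∀ s t, |D s - D t| ≤ 1 * |s - t| ^ α) ∧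
      (∀ t ≤ 0, D t = 0) ∧ (∀ t, 2 * Real.pi ≤ t → D t = 0) ∧ prim D (2 * Real.pi) = 0 ∧
      (∀ u v, 0 ≤ u → u < v → v ≤ 2 * Real.pi → ∃ x ∈ Icc u v, ∃ y ∈ Icc u v, D x ≠ D y) ∧
      (∀ (n : ℤ) (s : Finset ℤ), lpn p s (fourierCoef (eD D n)) ≤ 2) := by
  obtain ⟨q, hq⟩ := exists_surjective_nat (ℚ × ℚ)
  obtain ⟨D, S, h0, hG, hS, hDS, hsep, hd, hh, hl⟩ :=
    exists_seq h hα hp hrp (fun j => (((q j).1 : ℝ), ((q j).2 : ℝ)))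
  have hlim : ∀ t, ∃ l, Tendsto (fun j => D j t) atTop (nhds l) := by
    intro t
    apply cauchySeq_tendsto_of_complete
    apply cauchySeq_of_le_geometric (1/2) (1/4) (by norm_num)
    intro j
    rw [dist_comm, Real.dist_eq]
    exact hd j t
  choose L hL using hlim
  have gj : ∀ j : ℕ, 0 ≤ 1/2 - 1/2 * (1/2 : ℝ)^j ∧ 1/2 - 1/2 * (1/2 : ℝ)^j ≤ 1/2 := by
    intro j
    have : (1/2 : ℝ)^j ≤ 1 := pow_le_one₀ (by norm_num) (by norm_num)
    have : (0:ℝ) < (1/2 : ℝ)^j := by positivity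
    constructor <;> linarith
  have B1 : ∀ j t, |D j t| ≤ 1/2 - 1/2 * (1/2)^j := by
    intro j t
    induction j with
    | zero => rw [h0]; simp
    | succ j ih =>
      have := abs_add_le (D (j+1) t - D j t) (D j t)
      rw [sub_add_cancel] at this
      have := hd j t
      rw [pow_succ]; linarith
  have B2 : ∀ j s t, |D j s - D j t| ≤ (1/2 - 1/2 * (1/2)^j) * |s - t| ^ α := by
    intro j s t
    induction j with
    | zero => rw [h0]; simp
    | succ j ih =>
      have := abs_add_le ((D (j+1) s - D j s) - (D (j+1) t - D j t)) (D j s - D j t)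
      rw [show ((D (j+1) s - D j s) - (D (j+1) t - D j t)) + (D j s - D j t)
        = D (j+1) s - D (j+1) t by ring] at this
      have := hh j s t
      rw [pow_succ]; linarith
  have B3 : ∀ j (n : ℤ) (s : Finset ℤ), lpn p s (fourierCoef (eD (D j) n)) ≤
      1 + (1/2 - 1/2 * (1/2)^j) := by
    intro j n s
    induction j with
    | zero => rw [h0]; simpa using lpn_zero hp n s
    | succ j ih =>
      have := hl j n s
      rw [pow_succ]; linarith
  have Lb : ∀ t, |L t| ≤ 1/2 := fun t =>
    le_of_tendsto (hL t).abs (Eventually.of_forall fun j => (B1 j t).trans (gj j).2)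
  have Lh : ∀ s t, |L s - L t| ≤ 1 * |s - t| ^ α := fun s t =>
    le_of_tendsto ((hL s).sub (hL t)).abs (Eventually.of_forall fun j => (B2 j s t).trans (by
      gcongr; linarith [(gj j).2]))
  have Lc := continuous_of_holder hα Lh
  have cst : ∀ j m x, x ∈ S j → x ∈ S (j + m) ∧ D (j + m) x = D j x := by
    intro j m x hx
    induction m with
    | zero => exact ⟨hx, rfl⟩
    | succ m ih => exact ⟨hS _ ih.1, (hDS _ x ih.1).trans ih.2⟩
  have LS : ∀ j, ∀ x ∈ S j, L x = D j x := by
    intro j x hx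
    refine tendsto_nhds_unique (hL x) (tendsto_const_nhds.congr' ?_)
    filter_upwards [eventually_ge_atTop j] with m hm
    obtain ⟨m, rfl⟩ := Nat.exists_eq_add_of_le hm
    exact (cst j m x hx).2.symm
  have pl : ∀ t, Tendsto (fun j => prim (D j) t) atTop (nhds (prim L t)) := by
    intro t
    unfold prim
    refine intervalIntegral.tendsto_integral_filter_of_dominated_convergence (fun _ => 1/2) ?_ ?_ ?_ ?_
    · exact Eventually.of_forall fun j => (hG j).cont.aestronglyMeasurable
    · exact Eventually.of_forall fun j => Eventually.of_forall fun x _ => (B1 j x).trans (gj j).2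
    · simp
    · exact Eventually.of_forall fun x _ => hL x
  have fl : ∀ n k, Tendsto (fun j => fourierCoef (eD (D j) n) k) atTop
      (nhds (fourierCoef (eD L n) k)) := by
    intro n k
    unfold fourierCoef
    refine Tendsto.const_mul _ ?_
    simp only [eD_mul]
    refine intervalIntegral.tendsto_integral_filter_of_dominated_convergence (fun _ => 1) ?_ ?_ ?_ ?_
    · refine Eventually.of_forall fun j => ?_
      have := prim_cont (hG j).cont
      apply Continuous.aestronglyMeasurable
      fun_prop
    · exact Eventually.of_forall fun j => Eventually.of_forall fun x _ => (norm_exp_I _).le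
    · simp
    · refine Eventually.of_forall fun x _ => ?_
      have hcont : Continuous fun y : ℝ =>
        Complex.exp (Complex.I * (((n:ℝ) * (x + y) - (k:ℝ) * x : ℝ) : ℂ)) := by fun_prop
      exact (hcont.tendsto _).comp (pl x)
  refine ⟨L, Lb, Lh, ?_, ?_, ?_, ?_, ?_⟩
  · intro t ht
    refine tendsto_nhds_unique (hL t) (tendsto_const_nhds.congr fun j => ?_)
    exact ((hG j).neg t ht).symm
  · intro t ht
    refine tendsto_nhds_unique (hL t) (tendsto_const_nhds.congr fun j => ?_)
    exact ((hG j).ge t ht).symm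
  · refine tendsto_nhds_unique (pl _) (tendsto_const_nhds.congr fun j => ?_)
    exact ((hG j).int).symm
  · intro u v hu huv hv
    obtain ⟨a, ha1, ha2⟩ := exists_rat_btwn huv
    obtain ⟨b, hb1, hb2⟩ := exists_rat_btwn ha2
    obtain ⟨j, hj⟩ := hq (a, b)
    obtain ⟨x, hx, y, hy, hxI, hyI, hne⟩ := hsep j (by rw [hj]; exact hu.trans ha1.le)
      (by rw [hj]; exact hb1) (by rw [hj]; exact hb2.le.trans hv)
    rw [hj] at hxI hyI
    refine ⟨x, ⟨ha1.le.trans hxI.1, hxI.2.trans hb2.le⟩, y,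
      ⟨ha1.le.trans hyI.1, hyI.2.trans hb2.le⟩, ?_⟩
    rw [LS _ x hx, LS _ y hy]; exact hne
  · intro n s
    have : Tendsto (fun j => lpn p s (fourierCoef (eD (D j) n))) atTop
        (nhds (lpn p s (fourierCoef (eD L n)))) := by
      unfold lpn
      refine Tendsto.rpow_const ?_ (Or.inr (by positivity))
      refine tendsto_finsetSum _ fun k _ => ?_
      exact (fl n k).norm.rpow_const (Or.inr (by linarith))
    refine le_of_tendsto this (Eventually.of_forall fun j => (B3 j n s).trans ?_)
    linarith [(gj j).2]

lemma exists_h {p α : ℝ} (hα : 0 < α) {D : ℝ → ℝ} (Db : ∀ t, |D t| ≤ 1/2)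
    (Dh : ∀ s t, |D s - D t| ≤ 1 * |s - t| ^ α)
    (D0 : ∀ t ≤ 0, D t = 0) (D1 : ∀ t, 2 * Real.pi ≤ t → D t = 0)
    (Dp : prim D (2 * Real.pi) = 0)
    (Ds : ∀ u v, 0 ≤ u → u < v → v ≤ 2 * Real.pi → ∃ x ∈ Icc u v, ∃ y ∈ Icc u v, D x ≠ D y)
    (Dl : ∀ (n : ℤ) (s : Finset ℤ), lpn p s (fourierCoef (eD D n)) ≤ 2) :
    ∃ h : ℝ → ℝ,
      ContDiff ℝ 1 h ∧
      (∀ t : ℝ, h (t + 2 * Real.pi) = h t + 2 * Real.pi) ∧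
      StrictMono h ∧
      (∀ t : ℝ, 0 < deriv h t) ∧
      (∃ C : ℝ, 0 < C ∧ ∀ s t : ℝ, |deriv h s - deriv h t| ≤ C * |s - t| ^ α) ∧
      (∀ u v : ℝ, u < v → ¬ ∃ a b : ℝ, ∀ t ∈ Ioo u v, h t = a * t + b) ∧
      ∀ (n : ℤ) (s : Finset ℤ),
        lpn p s (fourierCoef (fun t => Complex.exp (Complex.I * (n : ℂ) * (h t : ℂ)))) ≤ 2 := by
  have pi0 := Real.pi_pos
  have T0 : 0 < 2 * Real.pi := by positivity
  set m : ℝ → ℤ := fun t => ⌊t / (2 * Real.pi)⌋ with hm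
  set E : ℝ → ℝ := fun t => D (t - 2 * Real.pi * m t) with hE
  have m0 : ∀ t, 0 ≤ t - 2 * Real.pi * m t := fun t => by
    have := Int.floor_le (t / (2 * Real.pi))
    rw [le_div_iff₀ T0] at this
    simp only [hm]; linarith
  have m1 : ∀ t, t - 2 * Real.pi * m t < 2 * Real.pi := fun t => by
    have := Int.lt_floor_add_one (t / (2 * Real.pi))
    rw [div_lt_iff₀ T0] at this
    simp only [hm]; linarith
  have Eper : ∀ t (i : ℤ), E (t + 2 * Real.pi * i) = E t := fun t i => by
    simp only [hE, hm]
    rw [add_div, mul_div_cancel_left₀ _ T0.ne', Int.floor_add_intCast]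
    push_cast; congr 1; ring
  have ED : ∀ t ∈ Icc 0 (2 * Real.pi), E t = D t := fun t ht => by
    rcases ht.2.lt_or_eq with hlt | heq
    · simp only [hE, hm]
      rw [Int.floor_eq_zero_iff.2 ⟨by have := ht.1; positivity, by rwa [div_lt_one T0]⟩]; simp
    · have := Eper 0 1
      rw [Int.cast_one, mul_one, zero_add] at this
      rw [heq, this, D1 _ le_rfl]
      simp only [hE, hm]; simp [D0]
  have aux : ∀ s t, m s < m t → |E s - E t| ≤ 2 * |s - t| ^ α := by
    intro s t hst
    have hst' : (m s : ℝ) + 1 ≤ m t := by exact_mod_cast hst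
    have e := mul_le_mul_of_nonneg_left hst' T0.le
    have := m0 s
    have := m0 t
    have := m1 s
    have := m1 t
    have hle : s ≤ t := by linarith
    have b1 := Dh (s - 2 * Real.pi * m s) (2 * Real.pi)
    have b2 := Dh (t - 2 * Real.pi * m t) 0
    rw [D1 _ le_rfl, sub_zero] at b1
    rw [D0 0 le_rfl, sub_zero, sub_zero] at b2
    have c1 : |s - 2 * Real.pi * m s - 2 * Real.pi| ^ α ≤ |s - t| ^ α := by
      apply Real.rpow_le_rpow (abs_nonneg _) _ hα.le
      rw [abs_of_nonpos (by linarith), abs_of_nonpos (by linarith)]; linarith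
    have c2 : |t - 2 * Real.pi * m t| ^ α ≤ |s - t| ^ α := by
      apply Real.rpow_le_rpow (abs_nonneg _) _ hα.le
      rw [abs_of_nonneg (by linarith), abs_of_nonpos (by linarith)]; linarith
    have := abs_sub (E s) (E t)
    simp only [hE] at *
    linarith
  have Eh : ∀ s t, |E s - E t| ≤ 2 * |s - t| ^ α := by
    intro s t
    rcases lt_trichotomy (m s) (m t) with c | c | c
    · exact aux s t c
    · have := Dh (s - 2 * Real.pi * m s) (t - 2 * Real.pi * m t)
      rw [c] at this
      rw [sub_sub_sub_cancel_right] at this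
      simp only [hE]; rw [c]
      have : 0 ≤ |s - t| ^ α := by positivity
      linarith
    · rw [abs_sub_comm, abs_sub_comm s t]; exact aux t s c
  have Ec := continuous_of_holder hα Eh
  have pE : ∀ t ∈ Icc 0 (2 * Real.pi), prim E t = prim D t := fun t ht => by
    unfold prim
    apply intervalIntegral.integral_congr
    intro v hv
    rw [uIcc_of_le ht.1] at hv
    exact ED v ⟨hv.1, hv.2.trans ht.2⟩
  set h : ℝ → ℝ := fun t => t + prim E t with hh
  have hd : ∀ t, HasDerivAt h (1 + E t) t := fun t =>
    (hasDerivAt_id t).fun_add (prim_hasDeriv Ec t)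
  have hde : deriv h = fun t => 1 + E t := funext fun t => (hd t).deriv
  have hpos : ∀ t, 0 < deriv h t := fun t => by
    rw [hde]
    have := (abs_le.1 (Db (t - 2 * Real.pi * m t))).1
    simp only [hE]; linarith
  refine ⟨h, ?_, ?_, strictMono_of_deriv_pos hpos, hpos, ⟨2, two_pos, ?_⟩, ?_, ?_⟩
  · rw [contDiff_one_iff_deriv]
    exact ⟨fun t => (hd t).differentiableAt, by rw [hde]; fun_prop⟩
  · have := eq_of_deriv (f := fun t => prim E (t + 2 * Real.pi)) (g := prim E) (φ := E) ?_
      (prim_hasDeriv Ec) ?_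
    · intro t
      have := congrFun this t
      simp only [hh] at *
      linarith
    · intro t
      refine ((prim_hasDeriv Ec (t + 2 * Real.pi)).comp t
        ((hasDerivAt_id t).add_const (2 * Real.pi))).congr_deriv ?_
      have := Eper t 1
      rw [Int.cast_one, mul_one] at this
      rw [this, mul_one]
    · simp only [zero_add, prim_zero]
      rw [pE _ ⟨T0.le, le_rfl⟩, Dp]
  · intro s t
    rw [hde]; simp only [add_sub_add_left_eq_sub]; exact Eh s t
  · rintro u v huv ⟨a, b, hab⟩
    have hEa : ∀ t ∈ Ioo u v, E t = a - 1 := by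
      intro t ht
      have h1 : HasDerivAt (fun t => a * t + b) a t := by
        simpa using ((hasDerivAt_id t).const_mul a).add_const b
      have h2 : HasDerivAt h a t := h1.congr_of_eventuallyEq (by
        filter_upwards [Ioo_mem_nhds ht.1 ht.2] with x hx using hab x hx)
      have := h2.unique (hd t)
      linarith
    obtain ⟨w, w1, w2⟩ := exists_between (lt_min (m1 u)
      (show u - 2 * Real.pi * m u < v - 2 * Real.pi * m u by linarith))
    obtain ⟨z, z1, z2⟩ := exists_between w2
    rw [lt_min_iff] at z2
    obtain ⟨x, hx, y, hy, hne⟩ := Ds w z ((m0 u).trans w1.le) z1 z2.1.le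
    have key : ∀ x ∈ Icc w z, D x = a - 1 := by
      intro x hx
      rw [← ED x ⟨((m0 u).trans w1.le).trans hx.1, hx.2.trans z2.1.le⟩, ← Eper x (m u)]
      exact hEa _ ⟨by linarith [hx.1], by linarith [hx.2, z2.2]⟩
    exact hne ((key x hx).trans (key y hy).symm)
  · intro n s
    have : fourierCoef (fun t => Complex.exp (Complex.I * (n : ℂ) * (h t : ℂ)))
        = fourierCoef (eD D n) := by
      funext k
      unfold fourierCoef
      congr 1
      apply intervalIntegral.integral_congr
      intro t ht
      rw [uIcc_of_le T0.le] at ht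
      simp only [eD, hh]
      rw [pE t ht]
    rw [this]; exact Dl n s

lemma ApNorm_le {p B : ℝ} (hp : 1 < p) (hB : 0 ≤ B) {g : ℝ → ℂ}
    (hl : ∀ s, lpn p s (fourierCoef g) ≤ B) : ApNorm p g ≤ ENNReal.ofReal B := by
  have p0 : 0 < p := by linarith
  unfold ApNorm
  rw [one_div, ENNReal.rpow_inv_le_iff p0, ENNReal.tsum_eq_iSup_sum]
  refine iSup_le fun s => ?_
  have e : ∀ k, (‖fourierCoef g k‖₊ : ℝ≥0∞) ^ p = ENNReal.ofReal (‖fourierCoef g k‖ ^ p) := by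
    intro k
    rw [← ENNReal.ofReal_rpow_of_nonneg (norm_nonneg _) p0.le, ofReal_norm]; rfl
  simp only [e]
  rw [← ENNReal.ofReal_sum_of_nonneg (fun _ _ => by positivity),
    ENNReal.ofReal_rpow_of_nonneg hB p0.le]
  apply ENNReal.ofReal_le_ofReal
  have := hl s
  rw [lpn, one_div, Real.rpow_inv_le_iff_of_pos (by positivity) hB p0] at this
  exact this

lemma lpn_sum {p : ℝ} (hp : 1 < p) (s : Finset ℤ) (N : Finset ℤ) (a : ℤ → ℂ) (c : ℤ → ℤ → ℂ)
    (hc : ∀ n, lpn p s (c n) ≤ 2) :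
    lpn p s (fun k => ∑ n ∈ N, a n * c n k) ≤ 2 * ∑ n ∈ N, ‖a n‖ := by
  classical
  have p0 : 0 < p := by linarith
  induction N using Finset.induction_on with
  | empty =>
    simp [lpn, Real.zero_rpow p0.ne']
    rw [Real.zero_rpow (inv_ne_zero p0.ne')]
  | insert n N hn ih =>
    simp only [Finset.sum_insert hn]
    refine (lpn_add hp s _ _).trans ?_
    have : lpn p s (fun k => a n * c n k) = ‖a n‖ * lpn p s (c n) := by
      unfold lpn
      simp only [norm_mul, Real.mul_rpow (norm_nonneg _) (norm_nonneg _)]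
      rw [← Finset.mul_sum, Real.mul_rpow (by positivity) (by positivity),
        ← Real.rpow_mul (norm_nonneg _), mul_one_div, div_self p0.ne', Real.rpow_one]
    rw [this]
    have := mul_le_mul_of_nonneg_left (hc n) (norm_nonneg (a n))
    linarith

lemma fourier_expand {f : ℝ → ℂ} (hf : Continuous f) (hper : Function.Periodic f (2 * Real.pi))
    (hs : Summable fun n => ‖fourierCoef f n‖) (t : ℝ) :
    HasSum (fun n : ℤ => fourierCoef f n * Complex.exp (Complex.I * (n : ℂ) * (t : ℂ))) (f t) := by
  have : Fact (0 < 2 * Real.pi) := ⟨by positivity⟩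
  have hpi : (Real.pi : ℂ) ≠ 0 := by exact_mod_cast Real.pi_ne_zero
  let F : C(AddCircle (2 * Real.pi), ℂ) := ⟨hper.lift, continuous_coinduced_dom.mpr hf⟩
  have hF : ∀ x : ℝ, F (x : AddCircle (2 * Real.pi)) = f x := fun x => hper.lift_coe x
  have fe : ∀ (n : ℤ) (x : ℝ), fourier n (x : AddCircle (2 * Real.pi)) =
      Complex.exp (Complex.I * (n : ℂ) * (x : ℂ)) := by
    intro n x
    rw [fourier_coe_apply]
    congr 1
    push_cast
    field_simp
  have hco : ∀ n, fourierCoeff F n = fourierCoef f n := by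
    intro n
    rw [fourierCoeff_eq_intervalIntegral _ n 0, fourierCoef, zero_add]
    rw [← Complex.coe_smul]
    rw [smul_eq_mul]
    congr 1
    · push_cast; rfl
    · apply intervalIntegral.integral_congr
      intro x _
      simp only [fe, hF, smul_eq_mul]
      rw [mul_comm]; congr 2; push_cast; ring
  have := has_pointwise_sum_fourier_series_of_summable (f := F) (by
    rw [show fourierCoeff F = fourierCoef f from funext hco]; exact hs.of_norm) (t : AddCircle (2 * Real.pi))
  simp only [hco, hF, fe, smul_eq_mul] at this
  exact this

open Filter in
lemma superpos {p : ℝ} (hp : 1 < p) {h : ℝ → ℝ} (hc : Continuous h)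
    (hl : ∀ (n : ℤ) (s : Finset ℤ),
      lpn p s (fourierCoef (fun t => Complex.exp (Complex.I * (n : ℂ) * (h t : ℂ)))) ≤ 2)
    {f : ℝ → ℂ} (hf : Continuous f) (hper : Function.Periodic f (2 * Real.pi)) :
    ApNorm p (fun t => f (h t)) ≤ ENNReal.ofReal 2 * ApNorm 1 f := by
  have e1 : ApNorm 1 f = ∑' k, (‖fourierCoef f k‖₊ : ℝ≥0∞) := by simp [ApNorm]
  by_cases htop : ApNorm 1 f = ⊤
  · rw [htop, ENNReal.mul_top (by simp)]; exact le_top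
  rw [e1] at htop ⊢
  have hs : Summable fun n => ‖fourierCoef f n‖ := by
    have := ENNReal.tsum_coe_ne_top_iff_summable.1 htop
    exact NNReal.summable_coe.2 this
  have e2 : ∑' k, (‖fourierCoef f k‖₊ : ℝ≥0∞) = ENNReal.ofReal (∑' k, ‖fourierCoef f k‖) := by
    rw [ENNReal.ofReal_tsum_of_nonneg (fun _ => norm_nonneg _) hs]
    congr 1; funext k; rw [ofReal_norm]; rfl
  rw [e2, ← ENNReal.ofReal_mul two_pos.le]
  have hsn : 0 ≤ ∑' k, ‖fourierCoef f k‖ := tsum_nonneg fun _ => norm_nonneg _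
  refine ApNorm_le hp (by positivity) fun s => ?_
  set c : ℤ → ℤ → ℂ := fun n =>
    fourierCoef (fun t => Complex.exp (Complex.I * (n : ℂ) * (h t : ℂ))) with hcdef
  have hsum : ∀ k, HasSum (fun n => fourierCoef f n * c n k)
      (fourierCoef (fun t => f (h t)) k) := by
    intro k
    have := intervalIntegral.hasSum_integral_of_dominated_convergence (μ := volume) (a := 0)
      (b := 2 * Real.pi)
      (F := fun (n : ℤ) (t : ℝ) => fourierCoef f n * Complex.exp (Complex.I * (n : ℂ) * (h t : ℂ))
        * Complex.exp (-Complex.I * (k : ℂ) * (t : ℂ)))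
      (f := fun t => f (h t) * Complex.exp (-Complex.I * (k : ℂ) * (t : ℂ)))
      (fun n _ => ‖fourierCoef f n‖) ?_ ?_ ?_ ?_ ?_
    · have := this.mul_left (1 / (2 * (Real.pi : ℂ)))
      refine Eq.mp (congrArg (fun g => HasSum g _) (funext fun n => ?_)) this
      symm
      simp only [hcdef, fourierCoef]
      rw [mul_left_comm, ← intervalIntegral.integral_const_mul]
      congr 2
      funext t; ring
    · intro n
      apply Continuous.aestronglyMeasurable
      fun_prop
    · intro n
      refine Eventually.of_forall fun t _ => ?_
      have a1 : Complex.I * (n : ℂ) * (h t : ℂ) = Complex.I * ((n * h t : ℝ) : ℂ) := by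
        push_cast; ring
      have a2 : -Complex.I * (k : ℂ) * (t : ℂ) = Complex.I * ((-(k * t) : ℝ) : ℂ) := by
        push_cast; ring
      rw [norm_mul, norm_mul, a1, a2, norm_exp_I, norm_exp_I, mul_one, mul_one]
    · exact Eventually.of_forall fun _ _ => hs
    · simp
    · exact Eventually.of_forall fun t _ => (fourier_expand hf hper hs (h t)).mul_right _
  have lim : Tendsto (fun N : Finset ℤ => lpn p s (fun k => ∑ n ∈ N, fourierCoef f n * c n k)) atTop
      (nhds (lpn p s (fourierCoef (fun t => f (h t))))) := by
    unfold lpn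
    refine Tendsto.rpow_const ?_ (Or.inr (by positivity))
    refine tendsto_finsetSum _ fun k _ => ?_
    exact Tendsto.rpow_const (hsum k).norm (Or.inr (by linarith))
  refine le_of_tendsto lim (Eventually.of_forall fun N => ?_)
  refine (lpn_sum hp s N _ c fun n => hl n s).trans ?_
  gcongr
  exact hs.sum_le_tsum N (fun _ _ => norm_nonneg _)

/-- for 1 < p < 2 and ε > 0 with p − 1 − ε > 0, there exists a nowhere
linear C^{1,p−1−ε}-diffeomorphism h of the circle with sup_n ‖e^{inh}‖_{A_p} < ∞;
consequently f ↦ f∘h is bounded from A(𝕋) to A_p(𝕋). -/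
theorem statement19
    (p ε : ℝ) (hp1 : 1 < p) (hp2 : p < 2) (hε : 0 < ε) (hpε : 0 < p - 1 - ε) :
    ∃ h : ℝ → ℝ,
      -- h is a C^{1,p−1−ε}-diffeomorphism of the circle
      ContDiff ℝ 1 h ∧
      (∀ t : ℝ, h (t + 2 * Real.pi) = h t + 2 * Real.pi) ∧
      StrictMono h ∧
      (∀ t : ℝ, 0 < deriv h t) ∧
      (∃ C : ℝ, 0 < C ∧ ∀ s t : ℝ, |deriv h s - deriv h t| ≤ C * |s - t| ^ (p - 1 - ε)) ∧
      -- h is nowhere linear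
      (∀ u v : ℝ, u < v → ¬ ∃ a b : ℝ, ∀ t ∈ Ioo u v, h t = a * t + b) ∧
      (∃ B : ℝ, 0 < B ∧
        -- sup_n ‖e^{inh}‖_{A_p} < ∞
        (∀ n : ℤ,
          ApNorm p (fun t => Complex.exp (Complex.I * (n : ℂ) * (h t : ℂ))) ≤
            ENNReal.ofReal B) ∧
        -- the superposition operator f ↦ f∘h is bounded from A(𝕋) to A_p(𝕋)
        (∀ f : ℝ → ℂ, Continuous f → Function.Periodic f (2 * Real.pi) →
          ApNorm p (fun t => f (h t)) ≤ ENNReal.ofReal B * ApNorm 1 f)) := by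
  set α := p - 1 - ε with hα
  have hα1 : α < 1 := by linarith
  set r : ℝ := (1/2 : ℝ) ^ (1 / α) with hr
  have r0 : 0 < r := by positivity
  have r1 : r < 1/2 := by
    have := Real.rpow_lt_rpow_of_exponent_gt (x := (1/2 : ℝ)) (by norm_num) (by norm_num)
      (show 1 < 1 / α by rw [lt_div_iff₀ hpε]; linarith)
    rwa [Real.rpow_one] at this
  have ra : r ^ α = 1/2 := by
    rw [hr, ← Real.rpow_mul (by norm_num), one_div_mul_cancel hpε.ne', Real.rpow_one]
  have hrp : 2 * r ^ (p - 1) < 1 := by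
    have := Real.rpow_lt_rpow_of_exponent_gt (x := r) r0 (by linarith)
      (show α < p - 1 by linarith)
    linarith
  obtain ⟨Φ, hΦ⟩ := exists_cantor r0 r1 hpε hα1 ra
  obtain ⟨D, d1, d2, d3, d4, d5, d6, d7⟩ := exists_limit hΦ hpε hp1 hrp
  obtain ⟨h, h1, h2, h3, h4, h5, h6, h7⟩ := exists_h hpε d1 d2 d3 d4 d5 d6 d7
  exact ⟨h, h1, h2, h3, h4, h5, h6, 2, two_pos, fun n => ApNorm_le hp1 two_pos.le (h7 n),
    fun f hf hper => superpos hp1 h1.continuous h7 hf hper⟩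
end
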